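/- arXiv:2201.10540 — 4 statements merged into one kernel-verified Lean document; each statement's English description precedes it below -/
import Mathlib

section
/- Let γ ∈ (0,2) and T > 0. Assume either γ ∈ (1,2) and G ∈ S_Rob, or γ ∈ (0,1] and G ∈ S_Neu. Then lim_{n→∞} [ (1/n) ∑_{x=1}^∞ sup_{s∈[0,T]} | n^γ ∑_{y=1}^∞ (G(s,y/n) − G(s,x/n)) p(y−x) − [−(−Δ)_{(0,∞)}^{γ/2}G](s, x/n) | + (1/n) ∑_{x=−∞}^{−1} sup_{s∈[0,T]} | n^γ ∑_{y=−∞}^{−1} (G(s,y/n) − G(s,x/n)) p(y−x) − [−(−Δ)_{(−∞,0)}^{γ/2}G](s, x/n) | + n^{γ−1} ∑_{y=1}^∞ sup_{s∈[0,T]} |G(s,y/n) − G(s,0)| p(y) ] = 0. -/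
open MeasureTheory Filter Set Topology

/-- Transition probability `p(z) = c⋅|z|^{-γ-1}` for `z ≠ 0`, `p(0)=0`. -/
noncomputable def transP (c γ : ℝ) (z : ℤ) : ℝ :=
  if z = 0 then 0 else c * |(z : ℝ)| ^ (-γ - 1)

/-- Truncated regional fractional Laplacian `[−(−Δ)_I^{γ/2}G]_ε(u)`. -/
noncomputable def regFracLapTrunc (c γ : ℝ) (I : Set ℝ) (G : ℝ → ℝ) (ε u : ℝ) : ℝ :=
  c * ∫ v in I ∩ {v : ℝ | ε ≤ |u - v|}, (G v - G u) / |u - v| ^ (γ + 1)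

/-- The regional fractional Laplacian `[−(−Δ)_I^{γ/2}G](u) = lim_{ε→0⁺} [...]_ε(u)`. -/
noncomputable def regFracLap (c γ : ℝ) (I : Set ℝ) (G : ℝ → ℝ) (u : ℝ) : ℝ :=
  limUnder (𝓝[>] (0 : ℝ)) (fun ε => regFracLapTrunc c γ I G ε u)

/-- `G ∈ S_Dif = P([0,T], C_c^∞(ℝ))`. -/
def SDifMem (G : ℝ → ℝ → ℝ) : Prop :=
  ∃ (k : ℕ) (a : ℕ → ℝ → ℝ),
    (∀ j : ℕ, ContDiff ℝ (⊤ : ℕ∞) (a j) ∧ HasCompactSupport (a j)) ∧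
    ∀ t u : ℝ, G t u = ∑ j ∈ Finset.range (k + 1), a j u * t ^ j

/-- `G ∈ S_Rob`. -/
def SRobMem (G : ℝ → ℝ → ℝ) : Prop :=
  ∃ Gm Gp : ℝ → ℝ → ℝ, SDifMem Gm ∧ SDifMem Gp ∧
    ∀ t u : ℝ, G t u = if u < 0 then Gm t u else Gp t u

/-- `G ∈ S_Neu`. -/
def SNeuMem (G : ℝ → ℝ → ℝ) : Prop :=
  ∃ (k : ℕ) (a : ℕ → ℝ → ℝ) (b : ℝ), 0 < b ∧
    (∀ j : ℕ, ContDiff ℝ (⊤ : ℕ∞) (a j) ∧ HasCompactSupport (a j) ∧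
      ∀ u : ℝ, |u| ≤ b → a j u = 0) ∧
    ∀ t u : ℝ, G t u = ∑ j ∈ Finset.range (k + 1), a j u * t ^ j

/-!
Folding the line around a point `u > 0` combines the increments of a test function `F` to `u - w`
and `u + w` into a kernel in `w` that is integrable up to `w = 0`: below `w = u` the increments
cancel to second order, and the uncompensated first order increment only starts at `w = u`. So the
regional fractional Laplacian at `u` is `c` times the integral of the folded kernel, and the
rescaled discrete generator is `c` times the Riemann sum of mesh `1 / n` of the same kernel.

Up to a factor of order `1 + u ^ (-(γ / 2))`, the kernel is at most a fixed integrable decreasing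
function, the majorant. Dominated convergence hence gives convergence of the Riemann sums at each
`u`. Integrated over `w`, the bound shows that the error at `u` is at most a constant times the
majorant of `u`, uniformly in `n`, where for large `u` the compact support of `F` yields the decay
`u ^ (-γ - 1)`. Dominated convergence a second time shows that the average of the errors over the
grid vanishes.

As `G` is a polynomial in time, the error at time `s` is the polynomial with the errors of the
coefficients, which bounds the supremum over `s`. The negative half-line follows by reflection. The
boundary sum is controlled by the Hölder continuity of `G` with exponent `γ / 2`, which lies
strictly between `γ - 1` and `γ`.
-/

section RiemannSum

variable {n : ℕ}

/-- The smallest point of the grid `ℕ / n` that is at least `w`. -/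
noncomputable def gridCeil (n : ℕ) (w : ℝ) : ℝ := (⌈w * n⌉₊ : ℝ) / n

/-- The right-endpoint Riemann sum of mesh `1 / n` of `f` over `(0, ∞)`. -/
noncomputable def riemannSum (n : ℕ) (f : ℝ → ℝ) : ℝ :=
  (n : ℝ)⁻¹ * ∑' x : ℕ, f (((x : ℝ) + 1) / n)

lemma le_gridCeil (hn : 0 < n) (w : ℝ) : w ≤ gridCeil n w := by
  rw [gridCeil, le_div_iff₀ (by positivity)]
  exact Nat.le_ceil _

lemma gridCeil_le_add_one (hn : 0 < n) {w : ℝ} (hw : 0 ≤ w) : gridCeil n w ≤ w + 1 := by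
  have one_le_n : (1 : ℝ) ≤ n := by exact_mod_cast hn
  rw [gridCeil, div_le_iff₀ (by positivity)]
  linarith [Nat.ceil_lt_add_one (a := w * n) (by positivity)]

lemma tendsto_gridCeil {w : ℝ} (hw : 0 ≤ w) : Tendsto (gridCeil · w) atTop (𝓝 w) :=
  (tendsto_nat_ceil_mul_div_atTop hw).comp tendsto_natCast_atTop_atTop

lemma measurable_comp_gridCeil (n : ℕ) (f : ℝ → ℝ) : Measurable fun w => f (gridCeil n w) :=
  (measurable_from_nat (f := fun m : ℕ => f ((m : ℝ) / n))).comp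
    (Nat.measurable_ceil.comp (measurable_id.mul_const _))

lemma natCeil_mul_eq_succ_iff (hn : 0 < n) (w : ℝ) (x : ℕ) :
    ⌈w * n⌉₊ = x + 1 ↔ w ∈ Ioc ((x : ℝ) / n) (((x : ℝ) + 1) / n) := by
  have n_pos : (0 : ℝ) < n := by exact_mod_cast hn
  rw [Nat.ceil_eq_iff (by simp), mem_Ioc, div_lt_iff₀ n_pos, le_div_iff₀ n_pos]
  simp

lemma iUnion_Ioc_natCast_div (hn : 0 < n) :
    ⋃ x : ℕ, Ioc ((x : ℝ) / n) (((x : ℝ) + 1) / n) = Ioi 0 := by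
  ext w
  simp only [mem_iUnion, ← natCeil_mul_eq_succ_iff hn]
  calc (∃ x, ⌈w * n⌉₊ = x + 1) ↔ 0 < ⌈w * n⌉₊ :=
        ⟨fun ⟨x, hx⟩ => by omega, fun h => ⟨⌈w * n⌉₊ - 1, by omega⟩⟩
    _ ↔ w ∈ Ioi 0 := by
        rw [Nat.ceil_pos, mem_Ioi, mul_pos_iff_of_pos_right (by exact_mod_cast hn)]

lemma hasSum_integral_comp_natCeil {E : Type*} [NormedAddCommGroup E] [NormedSpace ℝ E]
    [CompleteSpace E] (hn : 0 < n) {f : ℕ → E}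
    (hf : IntegrableOn (fun w : ℝ => f ⌈w * n⌉₊) (Ioi 0)) :
    HasSum (fun x : ℕ => (n : ℝ)⁻¹ • f (x + 1)) (∫ w : ℝ in Ioi 0, f ⌈w * n⌉₊) := by
  have disjoint_cells : Pairwise (Function.onFun Disjoint
      fun x : ℕ => Ioc ((x : ℝ) / n) (((x : ℝ) + 1) / n)) := fun x y hxy =>
    disjoint_left.2 fun w hx hy => hxy <| by
      rw [← natCeil_mul_eq_succ_iff hn] at hx hy
      omega
  have cell_integral (x : ℕ) :
      ∫ w in Ioc ((x : ℝ) / n) (((x : ℝ) + 1) / n), f ⌈w * n⌉₊ = (n : ℝ)⁻¹ • f (x + 1) := by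
    rw [setIntegral_congr_fun (g := fun _ => f (x + 1)) measurableSet_Ioc
      fun w hw => by simp only [(natCeil_mul_eq_succ_iff hn w x).2 hw], setIntegral_const,
      Real.volume_real_Ioc_of_le (by gcongr; linarith), ← sub_div, add_sub_cancel_left, one_div]
  have h := hasSum_integral_iUnion (μ := volume) (f := fun w : ℝ => f ⌈w * n⌉₊)
    (fun x : ℕ => measurableSet_Ioc) disjoint_cells (by rwa [iUnion_Ioc_natCast_div hn])
  simpa only [cell_integral, iUnion_Ioc_natCast_div hn] using h

variable {f g : ℝ → ℝ}

lemma integrableOn_comp_gridCeil (hn : 0 < n) (g_anti : AntitoneOn g (Ioi 0))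
    (g_int : IntegrableOn g (Ioi 0)) (hf : ∀ w, 0 < w → |f w| ≤ g w) :
    IntegrableOn (fun w => f (gridCeil n w)) (Ioi 0) := by
  refine Integrable.mono' g_int (measurable_comp_gridCeil n f).aestronglyMeasurable ?_
  filter_upwards [ae_restrict_mem measurableSet_Ioi] with w (hw : 0 < w)
  have hle := le_gridCeil hn w
  exact (hf _ (hw.trans_le hle)).trans (g_anti hw (hw.trans_le hle) hle)

lemma hasSum_integral_comp_gridCeil (hn : 0 < n) (g_anti : AntitoneOn g (Ioi 0))
    (g_int : IntegrableOn g (Ioi 0)) (hf : ∀ w, 0 < w → |f w| ≤ g w) :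
    HasSum (fun x : ℕ => (n : ℝ)⁻¹ * f (((x : ℝ) + 1) / n)) (∫ w in Ioi 0, f (gridCeil n w)) := by
  simpa only [gridCeil, Nat.cast_add, Nat.cast_one, smul_eq_mul] using
    hasSum_integral_comp_natCeil hn (f := fun m : ℕ => f ((m : ℝ) / n))
      (integrableOn_comp_gridCeil hn g_anti g_int hf)

lemma riemannSum_eq_integral (hn : 0 < n) (g_anti : AntitoneOn g (Ioi 0))
    (g_int : IntegrableOn g (Ioi 0)) (hf : ∀ w, 0 < w → |f w| ≤ g w) :
    riemannSum n f = ∫ w in Ioi 0, f (gridCeil n w) := by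
  rw [riemannSum, ← tsum_mul_left, (hasSum_integral_comp_gridCeil hn g_anti g_int hf).tsum_eq]

lemma hasSum_riemannSum (hn : 0 < n) (g_anti : AntitoneOn g (Ioi 0))
    (g_int : IntegrableOn g (Ioi 0)) (hf : ∀ w, 0 < w → |f w| ≤ g w) :
    HasSum (fun x : ℕ => (n : ℝ)⁻¹ * f (((x : ℝ) + 1) / n)) (riemannSum n f) :=
  riemannSum_eq_integral hn g_anti g_int hf ▸ hasSum_integral_comp_gridCeil hn g_anti g_int hf

lemma tendsto_riemannSum {f : ℕ → ℝ → ℝ} {F : ℝ → ℝ} (g_anti : AntitoneOn g (Ioi 0))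
    (g_int : IntegrableOn g (Ioi 0)) (hf : ∀ n, 0 < n → ∀ w, 0 < w → |f n w| ≤ g w)
    (hlim : ∀ᵐ w ∂volume.restrict (Ioi 0),
      Tendsto (fun n => f n (gridCeil n w)) atTop (𝓝 (F w))) :
    Tendsto (fun n => riemannSum n (f n)) atTop (𝓝 (∫ w in Ioi 0, F w)) := by
  have h : Tendsto (fun n => ∫ w in Ioi 0, f n (gridCeil n w)) atTop
      (𝓝 (∫ w in Ioi 0, F w)) := by
    refine tendsto_integral_filter_of_dominated_convergence g
      (.of_forall fun n => (measurable_comp_gridCeil n (f n)).aestronglyMeasurable) ?_ g_int hlim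
    filter_upwards [eventually_gt_atTop 0] with n hn
    filter_upwards [ae_restrict_mem measurableSet_Ioi] with w (hw : 0 < w)
    have hle := le_gridCeil hn w
    exact (hf n hn _ (hw.trans_le hle)).trans (g_anti hw (hw.trans_le hle) hle)
  refine h.congr' ?_
  filter_upwards [eventually_gt_atTop 0] with n hn
  exact (riemannSum_eq_integral hn g_anti g_int (hf n hn)).symm

lemma tendsto_inv_mul_tsum_of_le {f : ℕ → ℝ → ℝ} {b : ℕ → ℕ → ℝ} (g_anti : AntitoneOn g (Ioi 0))
    (g_int : IntegrableOn g (Ioi 0)) (hf : ∀ n, 0 < n → ∀ w, 0 < w → |f n w| ≤ g w)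
    (hlim : ∀ w, 0 < w → Tendsto (fun n => f n (gridCeil n w)) atTop (𝓝 0))
    (hb : ∀ n x, 0 ≤ b n x) (hbf : ∀ n, 0 < n → ∀ x : ℕ, b n x ≤ f n (((x : ℝ) + 1) / n)) :
    Tendsto (fun n : ℕ => (n : ℝ)⁻¹ * ∑' x, b n x) atTop (𝓝 0) := by
  have riemannSum_lim := tendsto_riemannSum g_anti g_int hf
    ((ae_restrict_iff' measurableSet_Ioi).2 (.of_forall hlim))
  rw [integral_zero] at riemannSum_lim
  refine squeeze_zero' (.of_forall fun n => mul_nonneg (by positivity) (tsum_nonneg (hb n))) ?_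
    riemannSum_lim
  filter_upwards [eventually_gt_atTop 0] with n hn
  have hasSum := hasSum_riemannSum hn g_anti g_int (hf n hn)
  have le (x : ℕ) : (n : ℝ)⁻¹ * b n x ≤ (n : ℝ)⁻¹ * f n (((x : ℝ) + 1) / n) := by
    gcongr
    exact hbf n hn x
  have summable := hasSum.summable.of_nonneg_of_le (fun x => mul_nonneg (by positivity) (hb n x)) le
  rw [← tsum_mul_left, ← hasSum.tsum_eq]
  exact summable.tsum_le_tsum le hasSum.summable

end RiemannSum

section Folding

lemma hasSum_of_hasSum_fold {E : Type*} [AddCommGroup E] [TopologicalSpace E]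
    [IsTopologicalAddGroup E] {D : ℕ → E} {x : ℕ} {a : E}
    (h : HasSum (fun z => D (z + (x + 1)) + if z < x then D (x - 1 - z) else 0) a) :
    HasSum D (a + D x) := by
  have left : HasSum (fun z => if z < x then D (x - 1 - z) else 0) (∑ y ∈ Finset.range x, D y) := by
    rw [← Finset.sum_range_reflect, ← Finset.sum_congr rfl
      fun z hz => if_pos (c := z < x) (e := 0) (Finset.mem_range.1 hz)]
    exact hasSum_sum_of_ne_finset_zero fun z hz => if_neg (by simpa using hz)
  have right : HasSum (fun z => D (z + (x + 1))) (a - ∑ y ∈ Finset.range x, D y) := by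
    simpa only [add_sub_cancel_right] using h.sub left
  simpa only [Finset.sum_range_succ, ← add_assoc, sub_add_cancel] using
    (hasSum_nat_add_iff (x + 1)).1 right

lemma setIntegral_eq_setIntegral_fold {E : Type*} [NormedAddCommGroup E] [NormedSpace ℝ E]
    {φ : ℝ → E} {u ε : ℝ} (hu : 0 < u) (hε : 0 < ε)
    (right : IntegrableOn (fun w => φ (u + w)) (Ici ε))
    (left : IntegrableOn (fun w => φ (u - w)) (Ico ε u)) :
    ∫ v in Ioi 0 ∩ {v : ℝ | ε ≤ |u - v|}, φ v =
      ∫ w in Ici ε, (φ (u + w) + if w < u then φ (u - w) else 0) := by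
  have domain_eq : Ioi 0 ∩ {v : ℝ | ε ≤ |u - v|} = Ici (u + ε) ∪ Ioc 0 (u - ε) := by
    ext v
    simp only [mem_inter_iff, mem_Ioi, mem_ofPred_eq, mem_union, mem_Ioc, mem_Ici, le_abs]
    grind
  have disj : Disjoint (Ici (u + ε)) (Ioc 0 (u - ε)) :=
    disjoint_left.2 fun v (hv : u + ε ≤ v) hv' => by linarith [hv'.2]
  have add_pres := measurePreserving_add_left (volume : Measure ℝ) u
  have add_emb := measurableEmbedding_addLeft (G := ℝ) u
  have sub_pres := Measure.measurePreserving_sub_left (volume : Measure ℝ) u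
  have sub_emb := (MeasurableEquiv.subLeft u).measurableEmbedding
  have add_preimage : (u + ·) ⁻¹' Ici (u + ε) = Ici ε := by ext; simp
  have sub_preimage : (u - ·) ⁻¹' Ioc 0 (u - ε) = Ico ε u := by ext; simp
  rw [← add_preimage] at right
  rw [← sub_preimage] at left
  rw [domain_eq, setIntegral_union disj measurableSet_Ioc
      ((add_pres.integrableOn_comp_preimage add_emb).1 right)
      ((sub_pres.integrableOn_comp_preimage sub_emb).1 left),
    ← add_pres.setIntegral_preimage_emb add_emb φ, ← sub_pres.setIntegral_preimage_emb sub_emb φ]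
  rw [add_preimage] at right ⊢
  rw [sub_preimage] at left ⊢
  have left' : IntegrableOn ((Iio u).indicator fun w => φ (u - w)) (Ici ε) := by
    rwa [IntegrableOn, integrable_indicator_iff measurableSet_Iio, IntegrableOn,
      Measure.restrict_restrict measurableSet_Iio, Iio_inter_Ici]
  rw [← Ici_inter_Iio, ← setIntegral_indicator measurableSet_Iio, ← integral_add right left']
  simp only [indicator, mem_Iio]

end Folding

section Majorant

lemma min_one_rpow_le {p q w : ℝ} (hw : 0 < w) (hq : 0 ≤ q) (hqp : q ≤ p) :
    min 1 (w ^ p) ≤ w ^ q := by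
  rcases le_total w 1 with h | h
  · exact min_le_of_right_le (Real.rpow_le_rpow_of_exponent_ge hw h hqp)
  · exact min_le_of_left_le (Real.one_le_rpow h hq)

lemma antitoneOn_min_rpow {a b : ℝ} (ha : a ≤ 0) (hb : b ≤ 0) :
    AntitoneOn (fun w : ℝ => min (w ^ a) (w ^ b)) (Ioi 0) := fun _ hv _ _ hvw =>
  min_le_min (Real.rpow_le_rpow_of_nonpos hv hvw ha) (Real.rpow_le_rpow_of_nonpos hv hvw hb)

lemma integrableOn_Ioi_min_rpow {a b : ℝ} (ha : -1 < a) (hb : b < -1) :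
    IntegrableOn (fun w : ℝ => min (w ^ a) (w ^ b)) (Ioi 0) := by
  have meas : Measurable fun w : ℝ => min (w ^ a) (w ^ b) := by fun_prop
  have norm_eq {w : ℝ} (hw : 0 < w) : ‖min (w ^ a) (w ^ b)‖ = min (w ^ a) (w ^ b) :=
    Real.norm_of_nonneg (by positivity)
  rw [← Ioc_union_Ioi_eq_Ioi zero_le_one]
  refine IntegrableOn.union
    (.mono' (intervalIntegral.intervalIntegrable_rpow' ha).1 meas.aestronglyMeasurable ?_)
    (.mono' (integrableOn_Ioi_rpow_of_lt hb one_pos) meas.aestronglyMeasurable ?_)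
  · filter_upwards [ae_restrict_mem measurableSet_Ioc] with w hw
    exact (norm_eq hw.1).trans_le (min_le_left _ _)
  · filter_upwards [ae_restrict_mem measurableSet_Ioi] with w (hw : 1 < w)
    exact (norm_eq (one_pos.trans hw)).trans_le (min_le_right _ _)

/-- For `0 < γ < 2`, an integrable decreasing function on `(0, ∞)` that controls both the regional
fractional Laplacian on `(0, ∞)`, as a function of the point, and its integrand, as a function of
the distance `w` to that point. The exponent `-(γ / 2)` comes from splitting the singularity
`w ^ (-γ)` of a one-sided increment at distance `w ≥ u` from `u` evenly between `u` and `w`. -/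
noncomputable def majorant (γ w : ℝ) : ℝ := min (w ^ (-(γ / 2))) (w ^ (-γ - 1))

lemma rpow_neg_half_eq (γ : ℝ) {w : ℝ} (hw : 0 < w) :
    w ^ (-(γ / 2)) = w ^ (1 + γ / 2) * w ^ (-γ - 1) := by
  rw [← Real.rpow_add hw]
  ring_nf

variable {γ : ℝ}

lemma majorant_nonneg {w : ℝ} (hw : 0 < w) : 0 ≤ majorant γ w := by
  unfold majorant
  positivity

lemma antitoneOn_majorant (hγ : 0 < γ) : AntitoneOn (majorant γ) (Ioi 0) :=
  antitoneOn_min_rpow (by linarith) (by linarith)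

lemma antitoneOn_const_mul_majorant (hγ : 0 < γ) {K : ℝ} (hK : 0 ≤ K) :
    AntitoneOn (fun w => K * majorant γ w) (Ioi 0) :=
  (monotone_mul_left_of_nonneg hK).comp_antitoneOn (antitoneOn_majorant hγ)

lemma integrableOn_majorant (hγ : 0 < γ) (hγ' : γ < 2) : IntegrableOn (majorant γ) (Ioi 0) :=
  integrableOn_Ioi_min_rpow (by linarith) (by linarith)

lemma majorant_eq_rpow (hγ : -2 ≤ γ) {w : ℝ} (hw : 1 ≤ w) : majorant γ w = w ^ (-γ - 1) :=
  min_eq_right (Real.rpow_le_rpow_of_exponent_le hw (by linarith))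

lemma rpow_le_mul_majorant (hγ : 0 < γ) {u S : ℝ} (hu : 0 < u) (huS : u ≤ S) (hS : 1 ≤ S) :
    u ^ (-(γ / 2)) ≤ S ^ (1 + γ / 2) * majorant γ u := by
  rw [majorant, mul_min_of_nonneg _ _ (by positivity)]
  refine le_min (le_mul_of_one_le_left (by positivity) (Real.one_le_rpow hS (by linarith))) ?_
  calc u ^ (-(γ / 2)) = u ^ (1 + γ / 2) * u ^ (-γ - 1) := rpow_neg_half_eq γ hu
    _ ≤ S ^ (1 + γ / 2) * u ^ (-γ - 1) := by gcongr

lemma one_add_rpow_le_mul_majorant (hγ : 0 < γ) {u S : ℝ} (hu : 0 < u) (huS : u ≤ S)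
    (hS : 1 ≤ S) :
    1 + u ^ (-(γ / 2)) ≤ (S ^ (γ / 2) + 1) * S ^ (1 + γ / 2) * majorant γ u := by
  have one_le : 1 ≤ S ^ (γ / 2) * u ^ (-(γ / 2)) := by
    rw [Real.rpow_neg hu.le, ← div_eq_mul_inv, one_le_div (by positivity)]
    gcongr
  calc 1 + u ^ (-(γ / 2)) ≤ (S ^ (γ / 2) + 1) * u ^ (-(γ / 2)) := by linarith
    _ ≤ (S ^ (γ / 2) + 1) * S ^ (1 + γ / 2) * majorant γ u := by
        rw [mul_assoc]
        gcongr
        exact rpow_le_mul_majorant hγ hu huS hS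

end Majorant

section C11Bound

lemma norm_second_difference_le {E : Type*} [NormedAddCommGroup E] [NormedSpace ℝ E] {F : ℝ → E}
    {K : NNReal} (hF : Differentiable ℝ F) (hF' : LipschitzWith K (deriv F)) (x w : ℝ) :
    ‖F (x + w) - F x + (F (x - w) - F x)‖ ≤ 2 * K * w ^ 2 := by
  wlog hw : 0 ≤ w generalizing w
  · simpa only [sub_neg_eq_add, ← sub_eq_add_neg, even_two.neg_pow, add_comm] using
      this (-w) (by linarith)
  have has_deriv (t : ℝ) : HasDerivAt (fun t => F (x + t) - F x + (F (x - t) - F x))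
      (deriv F (x + t) - deriv F (x - t)) t := by
    rw [sub_eq_add_neg]
    exact (((hF _).hasDerivAt.comp_const_add x t).sub_const _).add
      (((hF _).hasDerivAt.comp_const_sub x t).sub_const _)
  have deriv_le (t : ℝ) (ht : t ∈ Icc 0 w) :
      ‖deriv F (x + t) - deriv F (x - t)‖ ≤ K * (2 * w) := by
    refine (hF'.norm_sub_le _ _).trans (mul_le_mul_of_nonneg_left ?_ K.2)
    rw [Real.norm_of_nonneg (by linarith [ht.1])]
    linarith [ht.2]
  have h := (convex_Icc 0 w).norm_image_sub_le_of_norm_hasDerivWithin_le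
    (fun t _ => (has_deriv t).hasDerivWithinAt) deriv_le (left_mem_Icc.2 hw) (right_mem_Icc.2 hw)
  simp only [add_zero, sub_zero, sub_self, Real.norm_of_nonneg hw] at h
  exact h.trans_eq (by ring)

/-- A quantitative form of `F` being of class `C^{1,1}` with compact support: `C` bounds `F`, its
Lipschitz constant and its second differences, and `F` vanishes outside `[-R, R]`. -/
structure C11Bound (F : ℝ → ℝ) (C R : ℝ) : Prop where
  radius_nonneg : 0 ≤ R
  bound : ∀ x, |F x| ≤ C
  lipschitz : ∀ x y, |F x - F y| ≤ C * |x - y|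
  second_difference : ∀ x w, |F (x + w) - F x + (F (x - w) - F x)| ≤ C * w ^ 2
  eq_zero : ∀ x, R < |x| → F x = 0

lemma exists_c11Bound_of_hasCompactSupport {F : ℝ → ℝ} (hF : ContDiff ℝ 2 F)
    (hs : HasCompactSupport F) : ∃ C R, C11Bound F C R := by
  obtain ⟨B, hB⟩ := hs.exists_bound_of_continuous hF.continuous
  obtain ⟨K₁, hK₁⟩ := ContDiff.lipschitzWith_of_hasCompactSupport hs hF (by simp)
  obtain ⟨K₂, hK₂⟩ := ContDiff.lipschitzWith_of_hasCompactSupport hs.deriv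
    (ContDiff.iterate_deriv' 1 1 hF) one_ne_zero
  obtain ⟨R, hR⟩ := hs.isCompact.isBounded.exists_norm_le
  have B_nonneg : 0 ≤ B := (norm_nonneg _).trans (hB 0)
  refine ⟨B + K₁ + 2 * K₂, max R 0, le_max_right _ _, fun x => (hB x).trans ?_,
    fun x y => (hK₁.norm_sub_le x y).trans ?_, fun x w =>
    (norm_second_difference_le (hF.differentiable two_ne_zero) hK₂ x w).trans ?_, fun x hx => ?_⟩
  · linarith [K₁.coe_nonneg, K₂.coe_nonneg]
  · exact mul_le_mul_of_nonneg_right (by linarith [K₂.coe_nonneg]) (norm_nonneg _)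
  · exact mul_le_mul_of_nonneg_right (by linarith [K₁.coe_nonneg]) (sq_nonneg w)
  · by_contra h
    exact ((le_max_left R 0).trans_lt hx).not_ge (hR x (subset_tsupport F h))

namespace C11Bound

variable {F : ℝ → ℝ} {C R : ℝ}

lemma nonneg (h : C11Bound F C R) : 0 ≤ C := (abs_nonneg _).trans (h.bound 0)

lemma continuous (h : C11Bound F C R) : Continuous F :=
  (LipschitzWith.of_dist_le_mul (K := ⟨C, h.nonneg⟩) h.lipschitz).continuous

lemma abs_sub_le (h : C11Bound F C R) (x y : ℝ) : |F x - F y| ≤ 2 * C :=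
  (_root_.abs_sub _ _).trans (by linarith [h.bound x, h.bound y])

lemma abs_sub_le_mul_rpow (h : C11Bound F C R) {θ : ℝ} (hθ : 0 ≤ θ) (hθ' : θ ≤ 1) {x y : ℝ}
    (hxy : x ≠ y) : |F x - F y| ≤ 2 * C * |x - y| ^ θ := by
  have C_nonneg := h.nonneg
  calc |F x - F y| ≤ 2 * C * min 1 (|x - y| ^ (1 : ℝ)) := by
        rw [mul_min_of_nonneg _ _ (by positivity), mul_one, Real.rpow_one]
        refine le_min (h.abs_sub_le x y) ((h.lipschitz x y).trans ?_)
        gcongr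
        linarith
    _ ≤ 2 * C * |x - y| ^ θ := by
        gcongr
        exact min_one_rpow_le (abs_pos.2 (sub_ne_zero.2 hxy)) hθ hθ'

lemma abs_second_difference_le_mul_rpow (h : C11Bound F C R) {θ : ℝ} (hθ : 0 ≤ θ) (hθ' : θ ≤ 2)
    (x : ℝ) {w : ℝ} (hw : 0 < w) :
    |F (x + w) - F x + (F (x - w) - F x)| ≤ 4 * C * w ^ θ := by
  have C_nonneg := h.nonneg
  calc |F (x + w) - F x + (F (x - w) - F x)| ≤ 4 * C * min 1 (w ^ (2 : ℝ)) := by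
        rw [mul_min_of_nonneg _ _ (by positivity), mul_one, Real.rpow_two]
        refine le_min ((abs_add_le _ _).trans ?_) ((h.second_difference x w).trans ?_)
        · linarith [h.abs_sub_le (x + w) x, h.abs_sub_le (x - w) x]
        · gcongr
          linarith
    _ ≤ 4 * C * w ^ θ := by
        gcongr
        exact min_one_rpow_le hw hθ hθ'

end C11Bound

end C11Bound

section SymKernel

/-- The increments of `F` from `u` to the points of `(0, ∞)` at distance `w` from `u`, added up. -/
noncomputable def foldedIncrement (F : ℝ → ℝ) (u w : ℝ) : ℝ :=
  F (u + w) - F u + if w < u then F (u - w) - F u else 0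

/-- The integrand of the regional fractional Laplacian on `(0, ∞)` at `u`, symmetrized around `u`,
as a function of the distance `w` to `u`. Unlike the integrand itself, it is integrable up to
`w = 0` also for `γ ≥ 1`. -/
noncomputable def symKernel (γ : ℝ) (F : ℝ → ℝ) (u w : ℝ) : ℝ :=
  foldedIncrement F u w * w ^ (-γ - 1)

lemma foldedIncrement_sum {ι : Type*} (a : ι → ℝ → ℝ) (b : ι → ℝ) (S : Finset ι) (u w : ℝ) :
    foldedIncrement (fun v => ∑ j ∈ S, a j v * b j) u w =
      ∑ j ∈ S, foldedIncrement (a j) u w * b j := by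
  unfold foldedIncrement
  split_ifs <;>
    simp only [add_mul, sub_mul, add_zero, Finset.sum_add_distrib, Finset.sum_sub_distrib]

lemma symKernel_sum {ι : Type*} (γ : ℝ) (a : ι → ℝ → ℝ) (b : ι → ℝ) (S : Finset ι) (u w : ℝ) :
    symKernel γ (fun v => ∑ j ∈ S, a j v * b j) u w = ∑ j ∈ S, symKernel γ (a j) u w * b j := by
  simp only [symKernel, foldedIncrement_sum, Finset.sum_mul, mul_right_comm]

lemma measurable_symKernel {F : ℝ → ℝ} (hF : Measurable F) (γ u : ℝ) :
    Measurable (symKernel γ F u) := by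
  unfold symKernel foldedIncrement
  exact .mul (.add (by fun_prop) (.ite measurableSet_Iio (by fun_prop) measurable_const))
    (by fun_prop)

lemma continuousAt_foldedIncrement {F : ℝ → ℝ} (hF : Continuous F) {u w : ℝ} (hwu : w ≠ u) :
    ContinuousAt (fun q : ℝ × ℝ => foldedIncrement F q.1 q.2) (u, w) := by
  rcases hwu.lt_or_gt with h | h
  · have cont : Continuous fun q : ℝ × ℝ => F (q.1 + q.2) - F q.1 + (F (q.1 - q.2) - F q.1) := by
      fun_prop
    refine cont.continuousAt.congr ?_
    filter_upwards [(isOpen_lt continuous_snd continuous_fst).mem_nhds h] with q (hq : q.2 < q.1)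
    rw [foldedIncrement, if_pos hq]
  · have cont : Continuous fun q : ℝ × ℝ => F (q.1 + q.2) - F q.1 + 0 := by fun_prop
    refine cont.continuousAt.congr ?_
    filter_upwards [(isOpen_lt continuous_fst continuous_snd).mem_nhds h] with q (hq : q.1 < q.2)
    rw [foldedIncrement, if_neg hq.not_gt]

lemma continuousAt_symKernel {F : ℝ → ℝ} (hF : Continuous F) (γ : ℝ) {u w : ℝ} (hw : w ≠ 0)
    (hwu : w ≠ u) : ContinuousAt (fun q : ℝ × ℝ => symKernel γ F q.1 q.2) (u, w) :=
  (continuousAt_foldedIncrement hF hwu).mul (continuousAt_snd.rpow_const (.inl hw))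

namespace C11Bound

variable {γ : ℝ} {F : ℝ → ℝ} {C R : ℝ}

lemma abs_foldedIncrement_le (h : C11Bound F C R) (u w : ℝ) : |foldedIncrement F u w| ≤ 4 * C := by
  have C_nonneg := h.nonneg
  have right := abs_le.1 (h.abs_sub_le (u + w) u)
  have left := abs_le.1 (h.abs_sub_le (u - w) u)
  unfold foldedIncrement
  split_ifs <;> exact abs_le.2 ⟨by linarith, by linarith⟩

/-- Below `u` the increments to the left and to the right cancel to second order; beyond `u` only
the right one is left, and it is first order. -/
lemma abs_foldedIncrement_le_mul_rpow (h : C11Bound F C R) {θ : ℝ} (hθ : 0 ≤ θ) (hθ' : θ ≤ 1)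
    {u w : ℝ} (hu : 0 < u) (hw : 0 < w) :
    |foldedIncrement F u w| ≤ 4 * C * (1 + u ^ (-θ)) * w ^ (1 + θ) := by
  have C_nonneg := h.nonneg
  have rpow_nonneg : 0 ≤ u ^ (-θ) := by positivity
  unfold foldedIncrement
  split_ifs with hwu
  · have le := h.abs_second_difference_le_mul_rpow (θ := 1 + θ) (by linarith) (by linarith) u hw
    refine le.trans (mul_le_mul_of_nonneg_right ?_ (by positivity))
    exact le_mul_of_one_le_right (by positivity) (by linarith)
  · calc |F (u + w) - F u + 0| ≤ C * w := by
          simpa [abs_of_pos hw] using h.lipschitz (u + w) u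
      _ = C * (w ^ (-θ) * w ^ (1 + θ)) := by
          rw [← Real.rpow_add hw, neg_add_cancel_comm_assoc, Real.rpow_one]
      _ ≤ C * (u ^ (-θ) * w ^ (1 + θ)) := by
          gcongr ?_ * (?_ * _)
          exact Real.rpow_le_rpow_of_nonpos hu (not_lt.1 hwu) (neg_nonpos.2 hθ)
      _ ≤ 4 * C * (1 + u ^ (-θ)) * w ^ (1 + θ) := by
          rw [← mul_assoc]
          gcongr
          · linarith
          · linarith

lemma abs_symKernel_le_rpow (h : C11Bound F C R) (u : ℝ) {w : ℝ} (hw : 0 < w) :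
    |symKernel γ F u w| ≤ 4 * C * w ^ (-γ - 1) := by
  rw [symKernel, abs_mul, abs_of_pos (Real.rpow_pos_of_pos hw _)]
  gcongr
  exact h.abs_foldedIncrement_le u w

lemma abs_symKernel_le_majorant (h : C11Bound F C R) (hγ : 0 < γ) (hγ' : γ < 2) {v u w : ℝ}
    (hv : 0 < v) (hvu : v ≤ u) (hw : 0 < w) :
    |symKernel γ F u w| ≤ 4 * C * (1 + v ^ (-(γ / 2))) * majorant γ w := by
  have C_nonneg := h.nonneg
  have hu := hv.trans_le hvu
  calc |symKernel γ F u w| ≤ 4 * C * (1 + u ^ (-(γ / 2))) * majorant γ w := by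
        rw [majorant, mul_min_of_nonneg _ _ (by positivity)]
        refine le_min ?_ ((h.abs_symKernel_le_rpow u hw).trans ?_)
        · rw [symKernel, abs_mul, abs_of_pos (Real.rpow_pos_of_pos hw _), rpow_neg_half_eq γ hw,
            ← mul_assoc]
          gcongr
          exact h.abs_foldedIncrement_le_mul_rpow (by linarith) (by linarith) hu hw
        · refine mul_le_mul_of_nonneg_right ?_ (by positivity)
          exact le_mul_of_one_le_right (by positivity)
            (by linarith [Real.rpow_nonneg hu.le (-(γ / 2))])
    _ ≤ 4 * C * (1 + v ^ (-(γ / 2))) * majorant γ w := by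
        have rpow_le := Real.rpow_le_rpow_of_nonpos hv hvu (by linarith : -(γ / 2) ≤ 0)
        exact mul_le_mul_of_nonneg_right (by gcongr) (majorant_nonneg hw)

lemma symKernel_eq_zero (h : C11Bound F C R) {u w : ℝ} (hu : R < u) (hw : 0 < w)
    (hd : R < |u - w|) : symKernel γ F u w = 0 := by
  rw [symKernel, foldedIncrement, h.eq_zero u (hu.trans_le (le_abs_self _)), h.eq_zero (u - w) hd,
    h.eq_zero (u + w) (lt_of_lt_of_le (by linarith) (le_abs_self _))]
  simp

lemma integrableOn_symKernel (h : C11Bound F C R) (hγ : 0 < γ) (hγ' : γ < 2) {u : ℝ}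
    (hu : 0 < u) : IntegrableOn (symKernel γ F u) (Ioi 0) := by
  refine Integrable.mono'
    ((integrableOn_majorant hγ hγ').const_mul (4 * C * (1 + u ^ (-(γ / 2)))))
    (measurable_symKernel h.continuous.measurable γ u).aestronglyMeasurable ?_
  filter_upwards [ae_restrict_mem measurableSet_Ioi] with w (hw : 0 < w)
  exact h.abs_symKernel_le_majorant hγ hγ' hu le_rfl hw

lemma continuousAt_integral_symKernel (h : C11Bound F C R) (hγ : 0 < γ) (hγ' : γ < 2) {u : ℝ}
    (hu : 0 < u) : ContinuousAt (fun u => ∫ w in Ioi 0, symKernel γ F u w) u := by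
  refine continuousAt_of_dominated (bound := fun w =>
    4 * C * (1 + (u / 2) ^ (-(γ / 2))) * majorant γ w)
    (.of_forall fun v =>
      (measurable_symKernel h.continuous.measurable γ v).aestronglyMeasurable) ?_
    ((integrableOn_majorant hγ hγ').const_mul _) ?_
  · filter_upwards [lt_mem_nhds (half_lt_self hu)] with v hv
    filter_upwards [ae_restrict_mem measurableSet_Ioi] with w (hw : 0 < w)
    exact h.abs_symKernel_le_majorant hγ hγ' (half_pos hu) hv.le hw
  · filter_upwards [ae_restrict_mem measurableSet_Ioi,
      ae_restrict_of_ae (Measure.ae_ne volume u)] with w (hw : 0 < w) hwu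
    exact ContinuousAt.comp (f := fun v => (v, w))
      (continuousAt_symKernel h.continuous γ hw.ne' hwu) (by fun_prop)

end C11Bound

end SymKernel

section GridError

variable {γ : ℝ} {F : ℝ → ℝ} {C R : ℝ}

namespace C11Bound

lemma abs_integral_symKernel_comp_le (h : C11Bound F C R) (hγ : 0 < γ) (hγ' : γ < 2) {u : ℝ}
    (hu : 0 < u) {φ : ℝ → ℝ} (hφ : ∀ w, 0 < w → w ≤ φ w) :
    |∫ w in Ioi 0, symKernel γ F u (φ w)| ≤
      4 * C * (1 + u ^ (-(γ / 2))) * ∫ w in Ioi 0, majorant γ w := by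
  have C_nonneg := h.nonneg
  rw [← integral_const_mul, ← Real.norm_eq_abs]
  refine norm_integral_le_of_norm_le ((integrableOn_majorant hγ hγ').const_mul _) ?_
  filter_upwards [ae_restrict_mem measurableSet_Ioi] with w (hw : 0 < w)
  have φ_pos : 0 < φ w := hw.trans_le (hφ w hw)
  refine (h.abs_symKernel_le_majorant hγ hγ' hu le_rfl φ_pos).trans ?_
  gcongr
  exact antitoneOn_majorant hγ hw φ_pos (hφ w hw)

lemma abs_integral_symKernel_comp_le_of_le (h : C11Bound F C R) (hγ : 0 < γ) {u : ℝ}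
    (hu : 2 * R + 2 ≤ u) {φ : ℝ → ℝ} (hφ : ∀ w, 0 < w → w ≤ φ w ∧ φ w ≤ w + 1) :
    |∫ w in Ioi 0, symKernel γ F u (φ w)| ≤ 4 * C * (u / 2) ^ (-γ - 1) * (2 * R + 1) := by
  have C_nonneg := h.nonneg
  have R_nonneg := h.radius_nonneg
  have support_subset : Icc (u - R - 1) (u + R) ⊆ Ioi 0 := fun w hw => by
    rw [mem_Ioi]
    linarith [hw.1]
  have value_le (w : ℝ) (hw : w ∈ Icc (u - R - 1) (u + R)) :
      ‖symKernel γ F u (φ w)‖ ≤ 4 * C * (u / 2) ^ (-γ - 1) := by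
    have half_le : u / 2 ≤ φ w := by linarith [hw.1, (hφ w (support_subset hw)).1]
    refine (h.abs_symKernel_le_rpow u (by linarith)).trans ?_
    exact mul_le_mul_of_nonneg_left
      (Real.rpow_le_rpow_of_nonpos (by linarith) half_le (by linarith)) (by positivity)
  rw [setIntegral_eq_of_subset_of_forall_sdiff_eq_zero measurableSet_Ioi support_subset]
  · refine (norm_setIntegral_le_of_norm_le_const measure_Icc_lt_top value_le).trans_eq ?_
    rw [Real.volume_real_Icc_of_le (by linarith)]
    ring
  · rintro w ⟨hw : 0 < w, hw'⟩
    refine h.symKernel_eq_zero (by linarith) (hw.trans_le (hφ w hw).1) ?_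
    contrapose! hw'
    rw [abs_le] at hw'
    exact ⟨by linarith [(hφ w hw).2], by linarith [(hφ w hw).1]⟩

lemma exists_abs_integral_symKernel_comp_le (h : C11Bound F C R) (hγ : 0 < γ) (hγ' : γ < 2) :
    ∃ K, 0 ≤ K ∧ ∀ φ : ℝ → ℝ, (∀ w, 0 < w → w ≤ φ w ∧ φ w ≤ w + 1) → ∀ u, 0 < u →
      |∫ w in Ioi 0, symKernel γ F u (φ w)| ≤ K * majorant γ u := by
  have C_nonneg := h.nonneg
  have R_nonneg := h.radius_nonneg
  set S := 2 * R + 2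
  set J := ∫ w in Ioi 0, majorant γ w
  have J_nonneg : 0 ≤ J := setIntegral_nonneg measurableSet_Ioi fun w hw => majorant_nonneg hw
  refine ⟨max (4 * C * J * ((S ^ (γ / 2) + 1) * S ^ (1 + γ / 2)))
    (4 * C * (1 / 2) ^ (-γ - 1) * (2 * R + 1)), le_max_of_le_right (by positivity),
    fun φ hφ u hu => ?_⟩
  rcases le_total u S with huS | huS
  · calc |∫ w in Ioi 0, symKernel γ F u (φ w)| ≤ 4 * C * (1 + u ^ (-(γ / 2))) * J :=
          h.abs_integral_symKernel_comp_le hγ hγ' hu fun w hw => (hφ w hw).1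
      _ = 4 * C * J * (1 + u ^ (-(γ / 2))) := by ring
      _ ≤ 4 * C * J * ((S ^ (γ / 2) + 1) * S ^ (1 + γ / 2) * majorant γ u) := by
          gcongr
          exact one_add_rpow_le_mul_majorant hγ hu huS (by linarith)
      _ ≤ _ := by
          rw [← mul_assoc]
          exact mul_le_mul_of_nonneg_right (le_max_left _ _) (majorant_nonneg hu)
  · calc |∫ w in Ioi 0, symKernel γ F u (φ w)| ≤ 4 * C * (u / 2) ^ (-γ - 1) * (2 * R + 1) :=
          h.abs_integral_symKernel_comp_le_of_le hγ huS hφ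
      _ = 4 * C * (1 / 2) ^ (-γ - 1) * (2 * R + 1) * majorant γ u := by
          rw [majorant_eq_rpow (by linarith) (by linarith), div_eq_mul_one_div,
            Real.mul_rpow hu.le (by positivity)]
          ring
      _ ≤ _ := mul_le_mul_of_nonneg_right (le_max_right _ _) (majorant_nonneg hu)

lemma riemannSum_symKernel (h : C11Bound F C R) (hγ : 0 < γ) (hγ' : γ < 2) {n : ℕ}
    (hn : 0 < n) {u : ℝ} (hu : 0 < u) :
    riemannSum n (symKernel γ F u) = ∫ w in Ioi 0, symKernel γ F u (gridCeil n w) := by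
  have C_nonneg := h.nonneg
  exact riemannSum_eq_integral hn (antitoneOn_const_mul_majorant hγ (by positivity))
    ((integrableOn_majorant hγ hγ').const_mul _)
    fun w hw => h.abs_symKernel_le_majorant hγ hγ' hu le_rfl hw

lemma hasSum_riemannSum_symKernel (h : C11Bound F C R) (hγ : 0 < γ) (hγ' : γ < 2) {n : ℕ}
    (hn : 0 < n) {u : ℝ} (hu : 0 < u) :
    HasSum (fun x : ℕ => (n : ℝ)⁻¹ * symKernel γ F u (((x : ℝ) + 1) / n))
      (riemannSum n (symKernel γ F u)) := by
  have C_nonneg := h.nonneg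
  exact hasSum_riemannSum hn (antitoneOn_const_mul_majorant hγ (by positivity))
    ((integrableOn_majorant hγ hγ').const_mul _)
    fun w hw => h.abs_symKernel_le_majorant hγ hγ' hu le_rfl hw

end C11Bound

/-- The error of the Riemann sum of mesh `1 / n` for the integral of `symKernel γ F u`. Times `c`,
it is the error made by the discrete generator in approximating the regional fractional Laplacian
on `(0, ∞)` at a grid point `u`. -/
noncomputable def gridError (γ : ℝ) (F : ℝ → ℝ) (n : ℕ) (u : ℝ) : ℝ :=
  riemannSum n (symKernel γ F u) - ∫ w in Ioi 0, symKernel γ F u w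

variable {n : ℕ} {u : ℝ}

namespace C11Bound

lemma exists_abs_gridError_le (h : C11Bound F C R) (hγ : 0 < γ) (hγ' : γ < 2) :
    ∃ K, 0 ≤ K ∧ ∀ n, 0 < n → ∀ u, 0 < u → |gridError γ F n u| ≤ K * majorant γ u := by
  obtain ⟨K, K_nonneg, hK⟩ := h.exists_abs_integral_symKernel_comp_le hγ hγ'
  refine ⟨2 * K, by positivity, fun n hn u hu => (_root_.abs_sub _ _).trans ?_⟩
  have integral_le := hK id (fun w _ => ⟨le_rfl, (lt_add_one w).le⟩) u hu
  have riemannSum_le := hK (gridCeil n)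
    (fun w hw => ⟨le_gridCeil hn w, gridCeil_le_add_one hn hw.le⟩) u hu
  rw [← h.riemannSum_symKernel hγ hγ' hn hu] at riemannSum_le
  simp only [id_eq] at integral_le
  linarith

lemma tendsto_gridError (h : C11Bound F C R) (hγ : 0 < γ) (hγ' : γ < 2) (hu : 0 < u) :
    Tendsto (fun n => gridError γ F n (gridCeil n u)) atTop (𝓝 0) := by
  have C_nonneg := h.nonneg
  have grid_lim := tendsto_gridCeil hu.le
  have integral_lim := (h.continuousAt_integral_symKernel hγ hγ' hu).tendsto.comp grid_lim
  have riemannSum_lim : Tendsto (fun n => riemannSum n (symKernel γ F (gridCeil n u))) atTop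
      (𝓝 (∫ w in Ioi 0, symKernel γ F u w)) := by
    refine tendsto_riemannSum (antitoneOn_const_mul_majorant hγ
        (K := 4 * C * (1 + u ^ (-(γ / 2)))) (by positivity))
      ((integrableOn_majorant hγ hγ').const_mul _)
      (fun n hn w hw => h.abs_symKernel_le_majorant hγ hγ' hu (le_gridCeil hn u) hw) ?_
    filter_upwards [ae_restrict_mem measurableSet_Ioi,
      ae_restrict_of_ae (Measure.ae_ne volume u)] with w (hw : 0 < w) hwu
    exact Tendsto.comp (f := fun n => (gridCeil n u, gridCeil n w))
      (continuousAt_symKernel h.continuous γ hw.ne' hwu)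
      (grid_lim.prodMk_nhds (tendsto_gridCeil hw.le))
  simpa only [gridError, Function.comp_apply, sub_self] using riemannSum_lim.sub integral_lim

end C11Bound

lemma gridError_sum {ι : Type*} (hγ : 0 < γ) (hγ' : γ < 2) {a : ι → ℝ → ℝ} {C R : ι → ℝ}
    (ha : ∀ j, C11Bound (a j) (C j) (R j)) (S : Finset ι) (b : ι → ℝ) (hn : 0 < n) (hu : 0 < u) :
    gridError γ (fun v => ∑ j ∈ S, a j v * b j) n u = ∑ j ∈ S, gridError γ (a j) n u * b j := by
  have symKernel_eq : symKernel γ (fun v => ∑ j ∈ S, a j v * b j) u =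
      fun w => ∑ j ∈ S, symKernel γ (a j) u w * b j := funext fun w => symKernel_sum ..
  have riemannSum_eq : riemannSum n (fun w => ∑ j ∈ S, symKernel γ (a j) u w * b j) =
      ∑ j ∈ S, riemannSum n (symKernel γ (a j) u) * b j := by
    have hasSum := hasSum_sum (s := S) fun j _ =>
      ((ha j).hasSum_riemannSum_symKernel hγ hγ' hn hu).mul_right (b j)
    rw [riemannSum, ← tsum_mul_left, ← hasSum.tsum_eq]
    simp only [Finset.mul_sum, mul_assoc]
  have integral_eq : ∫ w in Ioi 0, ∑ j ∈ S, symKernel γ (a j) u w * b j =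
      ∑ j ∈ S, (∫ w in Ioi 0, symKernel γ (a j) u w) * b j := by
    rw [integral_finsetSum _ fun j _ =>
      ((ha j).integrableOn_symKernel hγ hγ' hu).mul_const (b j)]
    simp only [integral_mul_const]
  simp only [gridError, symKernel_eq, riemannSum_eq, integral_eq, sub_mul, Finset.sum_sub_distrib]

end GridError

section Generator

variable {γ : ℝ} {F g : ℝ → ℝ} {C R u : ℝ}

lemma regFracLap_congr {I : Set ℝ} (hI : MeasurableSet I) (c γ : ℝ) (hgF : EqOn g F I)
    (hu : u ∈ I) : regFracLap c γ I g u = regFracLap c γ I F u := by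
  have domain_meas (ε : ℝ) : MeasurableSet (I ∩ {v : ℝ | ε ≤ |u - v|}) :=
    hI.inter (measurableSet_le measurable_const (by fun_prop))
  unfold regFracLap
  congr 1
  ext ε
  unfold regFracLapTrunc
  congr 1
  refine setIntegral_congr_fun (domain_meas ε) fun v hv => ?_
  simp only [hgF hv.1, hgF hu]

lemma transP_of_ne_zero (c γ : ℝ) {z : ℤ} (hz : z ≠ 0) :
    transP c γ z = c * |(z : ℝ)| ^ (-γ - 1) := if_neg hz

lemma transP_neg (c γ : ℝ) (z : ℤ) : transP c γ (-z) = transP c γ z := by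
  simp only [transP, neg_eq_zero, Int.cast_neg, abs_neg]

lemma transP_natCast_add_one (c γ : ℝ) (y : ℕ) :
    transP c γ ((y : ℤ) + 1) = c * ((y : ℝ) + 1) ^ (-γ - 1) := by
  rw [transP_of_ne_zero c γ (by positivity)]
  push_cast
  rw [abs_of_pos (by positivity)]

lemma rpow_mul_transP_natCast_add_one (c γ : ℝ) {n : ℕ} (hn : 0 < n) (z : ℕ) :
    (n : ℝ) ^ γ * transP c γ ((z : ℤ) + 1) =
      c * ((n : ℝ)⁻¹ * (((z : ℝ) + 1) / n) ^ (-γ - 1)) := by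
  have n_pos : (0 : ℝ) < n := by exact_mod_cast hn
  have n_rpow : (n : ℝ) ^ γ * (n : ℝ) ^ (-γ - 1) = (n : ℝ)⁻¹ := by
    rw [← Real.rpow_add n_pos, ← Real.rpow_neg_one]
    ring_nf
  rw [transP_natCast_add_one, Real.div_rpow (by positivity) n_pos.le, ← n_rpow]
  field_simp

/-- The generator of the random walk with jump rates `transP c γ`, restricted to the positive
half-line, in the time scale `n ^ γ` and acting on the values of `g` on the grid `ℕ / n`. Both
sites `x + 1` and `y + 1` are indexed from `0`. -/
noncomputable def halfLineGenerator (c γ : ℝ) (n : ℕ) (g : ℝ → ℝ) (x : ℕ) : ℝ :=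
  (n : ℝ) ^ γ * ∑' y : ℕ, (g (((y : ℝ) + 1) / n) - g (((x : ℝ) + 1) / n)) *
    transP c γ (((y : ℤ) + 1) - ((x : ℤ) + 1))

lemma halfLineGenerator_congr (hgF : EqOn g F (Ioi 0)) (c γ : ℝ) {n : ℕ} (hn : 0 < n) (x : ℕ) :
    halfLineGenerator c γ n g x = halfLineGenerator c γ n F x := by
  have eq (y : ℕ) : g (((y : ℝ) + 1) / n) = F (((y : ℝ) + 1) / n) := hgF <| by
    rw [mem_Ioi]
    positivity
  simp only [halfLineGenerator, eq]

/-- The contribution of the jump from the site `x + 1` to the site `y + 1` to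
`halfLineGenerator`. -/
noncomputable def generatorTerm (c γ : ℝ) (n : ℕ) (g : ℝ → ℝ) (x y : ℕ) : ℝ :=
  (n : ℝ) ^ γ * ((g (((y : ℝ) + 1) / n) - g (((x : ℝ) + 1) / n)) *
    transP c γ (((y : ℤ) + 1) - ((x : ℤ) + 1)))

lemma halfLineGenerator_eq_tsum (c γ : ℝ) (n : ℕ) (g : ℝ → ℝ) (x : ℕ) :
    halfLineGenerator c γ n g x = ∑' y, generatorTerm c γ n g x y := tsum_mul_left.symm

lemma generatorTerm_self (c γ : ℝ) (n : ℕ) (g : ℝ → ℝ) (x : ℕ) :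
    generatorTerm c γ n g x x = 0 := by simp [generatorTerm]

lemma generatorTerm_add (c γ : ℝ) {n : ℕ} (hn : 0 < n) (g : ℝ → ℝ) (x z : ℕ) :
    generatorTerm c γ n g x (z + (x + 1)) =
      c * ((n : ℝ)⁻¹ * ((g (((x : ℝ) + 1) / n + ((z : ℝ) + 1) / n) - g (((x : ℝ) + 1) / n)) *
        (((z : ℝ) + 1) / n) ^ (-γ - 1))) := by
  have jump_eq : (((z + (x + 1) : ℕ) : ℤ) + 1) - ((x : ℤ) + 1) = (z : ℤ) + 1 := by omega
  have point_eq : (((z + (x + 1) : ℕ) : ℝ) + 1) / n = ((x : ℝ) + 1) / n + ((z : ℝ) + 1) / n := by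
    push_cast
    ring
  rw [generatorTerm, jump_eq, point_eq, mul_left_comm, rpow_mul_transP_natCast_add_one c γ hn]
  ring

lemma generatorTerm_sub (c γ : ℝ) {n : ℕ} (hn : 0 < n) (g : ℝ → ℝ) {x z : ℕ} (hzx : z < x) :
    generatorTerm c γ n g x (x - 1 - z) =
      c * ((n : ℝ)⁻¹ * ((g (((x : ℝ) + 1) / n - ((z : ℝ) + 1) / n) - g (((x : ℝ) + 1) / n)) *
        (((z : ℝ) + 1) / n) ^ (-γ - 1))) := by
  have jump_eq : (((x - 1 - z : ℕ) : ℤ) + 1) - ((x : ℤ) + 1) = -((z : ℤ) + 1) := by omega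
  have point_eq : (((x - 1 - z : ℕ) : ℝ) + 1) / n = ((x : ℝ) + 1) / n - ((z : ℝ) + 1) / n := by
    rw [Nat.sub_sub, Nat.cast_sub (by omega)]
    push_cast
    ring
  rw [generatorTerm, jump_eq, transP_neg, point_eq, mul_left_comm,
    rpow_mul_transP_natCast_add_one c γ hn]
  ring

lemma generatorTerm_fold (c γ : ℝ) {n : ℕ} (hn : 0 < n) (g : ℝ → ℝ) (x z : ℕ) :
    generatorTerm c γ n g x (z + (x + 1)) +
        (if z < x then generatorTerm c γ n g x (x - 1 - z) else 0) =
      c * ((n : ℝ)⁻¹ * symKernel γ g (((x : ℝ) + 1) / n) (((z : ℝ) + 1) / n)) := by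
  have lt_iff : ((z : ℝ) + 1) / n < ((x : ℝ) + 1) / n ↔ z < x := by
    rw [div_lt_div_iff_of_pos_right (by exact_mod_cast hn)]
    simp
  simp only [generatorTerm_add c γ hn, symKernel, foldedIncrement, lt_iff]
  split_ifs with hzx
  · rw [generatorTerm_sub c γ hn g hzx]
    ring
  · ring

namespace C11Bound

lemma halfLineGenerator_eq (h : C11Bound F C R) (hγ : 0 < γ) (hγ' : γ < 2) (c : ℝ) {n : ℕ}
    (hn : 0 < n) (x : ℕ) :
    halfLineGenerator c γ n F x = c * riemannSum n (symKernel γ F (((x : ℝ) + 1) / n)) := by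
  have hasSum_fold := (h.hasSum_riemannSum_symKernel hγ hγ' hn
    (u := ((x : ℝ) + 1) / n) (by positivity)).mul_left c
  simp only [← generatorTerm_fold c γ hn F x] at hasSum_fold
  have hasSum := hasSum_of_hasSum_fold (D := generatorTerm c γ n F x) hasSum_fold
  rw [halfLineGenerator_eq_tsum, hasSum.tsum_eq, generatorTerm_self, add_zero]

lemma integrableOn_Ici_mul_rpow (h : C11Bound F C R) (hγ : 0 < γ) (u : ℝ) {φ : ℝ → ℝ}
    (hφ : Continuous φ) {ε : ℝ} (hε : 0 < ε) :
    IntegrableOn (fun w => (F (φ w) - F u) * w ^ (-γ - 1)) (Ici ε) := by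
  have cont := h.continuous
  refine Integrable.mono' (((integrableOn_Ici_iff_integrableOn_Ioi).2
    (integrableOn_Ioi_rpow_of_lt (by linarith : -γ - 1 < -1) hε)).const_mul (2 * C))
    (Measurable.aestronglyMeasurable (by fun_prop)) ?_
  filter_upwards [ae_restrict_mem measurableSet_Ici] with w (hw : ε ≤ w)
  have rpow_nonneg : 0 ≤ w ^ (-γ - 1) := Real.rpow_nonneg (hε.le.trans hw) _
  rw [norm_mul, Real.norm_of_nonneg rpow_nonneg]
  exact mul_le_mul_of_nonneg_right (h.abs_sub_le _ _) rpow_nonneg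

lemma regFracLapTrunc_Ioi_eq (h : C11Bound F C R) (hγ : 0 < γ) (c : ℝ) (hu : 0 < u) {ε : ℝ}
    (hε : 0 < ε) :
    regFracLapTrunc c γ (Ioi 0) F ε u = c * ∫ w in Ici ε, symKernel γ F u w := by
  set φ : ℝ → ℝ := fun v => (F v - F u) * |u - v| ^ (-γ - 1)
  have φ_right {w : ℝ} (hw : 0 < w) : φ (u + w) = (F (u + w) - F u) * w ^ (-γ - 1) := by
    simp only [φ, sub_add_cancel_left, abs_neg, abs_of_pos hw]
  have φ_left {w : ℝ} (hw : 0 < w) : φ (u - w) = (F (u - w) - F u) * w ^ (-γ - 1) := by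
    simp only [φ, sub_sub_cancel, abs_of_pos hw]
  have right : IntegrableOn (fun w => φ (u + w)) (Ici ε) :=
    (integrableOn_congr_fun (fun w hw => φ_right (hε.trans_le hw)) measurableSet_Ici).2
      (h.integrableOn_Ici_mul_rpow hγ u (continuous_const_add u) hε)
  have left : IntegrableOn (fun w => φ (u - w)) (Ici ε) :=
    (integrableOn_congr_fun (fun w hw => φ_left (hε.trans_le hw)) measurableSet_Ici).2
      (h.integrableOn_Ici_mul_rpow hγ u (continuous_sub_left u) hε)
  have integrand_eq (v : ℝ) : (F v - F u) / |u - v| ^ (γ + 1) = φ v := by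
    rw [div_eq_mul_inv, ← Real.rpow_neg (abs_nonneg _), neg_add']
  simp only [regFracLapTrunc, integrand_eq]
  rw [setIntegral_eq_setIntegral_fold hu hε right (left.mono_set Ico_subset_Ici_self)]
  congr 1
  refine setIntegral_congr_fun measurableSet_Ici fun w (hw : ε ≤ w) => ?_
  simp only [φ_right (hε.trans_le hw), φ_left (hε.trans_le hw), symKernel, foldedIncrement,
    add_mul, ite_mul, zero_mul]

lemma regFracLap_Ioi_eq (h : C11Bound F C R) (hγ : 0 < γ) (hγ' : γ < 2) (c : ℝ) (hu : 0 < u) :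
    regFracLap c γ (Ioi 0) F u = c * ∫ w in Ioi 0, symKernel γ F u w := by
  have cover : AECover (volume.restrict (Ioi (0 : ℝ))) (𝓝[>] 0) fun ε => Ici ε :=
    aecover_Ioi_of_Ici (tendsto_id.mono_left nhdsWithin_le_nhds)
  have lim := (cover.integral_tendsto_of_countably_generated
    (h.integrableOn_symKernel hγ hγ' hu)).const_mul c
  refine (lim.congr' ?_).limUnder_eq
  filter_upwards [self_mem_nhdsWithin] with ε (hε : 0 < ε)
  rw [Measure.restrict_restrict measurableSet_Ici, inter_eq_left.2 (Ici_subset_Ioi.2 hε),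
    h.regFracLapTrunc_Ioi_eq hγ c hu hε]

lemma halfLineGenerator_sub_regFracLap (h : C11Bound F C R) (hγ : 0 < γ) (hγ' : γ < 2) (c : ℝ)
    {n : ℕ} (hn : 0 < n) (x : ℕ) :
    halfLineGenerator c γ n F x - regFracLap c γ (Ioi 0) F (((x : ℝ) + 1) / n) =
      c * gridError γ F n (((x : ℝ) + 1) / n) := by
  rw [h.halfLineGenerator_eq hγ hγ' c hn, h.regFracLap_Ioi_eq hγ hγ' c (by positivity), gridError,
    mul_sub]

end C11Bound

end Generator

section TestFunction

variable {γ T : ℝ}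

lemma hasCompactSupport_sum {ι X E : Type*} [TopologicalSpace X] [AddCommMonoid E] (S : Finset ι)
    {f : ι → X → E} (hf : ∀ i ∈ S, HasCompactSupport (f i)) :
    HasCompactSupport fun x => ∑ i ∈ S, f i x := by
  induction S using Finset.cons_induction with
  | empty => exact HasCompactSupport.zero
  | cons i S hi ih =>
    simp only [Finset.sum_cons]
    exact (hf i (S.mem_cons_self i)).add (ih fun j hj => hf j (Finset.mem_cons_of_mem hj))

namespace SDifMem

variable {G : ℝ → ℝ → ℝ}

lemma exists_c11Bound (hG : SDifMem G) (s : ℝ) : ∃ C R, C11Bound (G s) C R := by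
  obtain ⟨k, a, ha, hGa⟩ := hG
  rw [funext (hGa s)]
  exact exists_c11Bound_of_hasCompactSupport
    (.sum fun j _ => (contDiff_infty.1 (ha j).1 2).mul contDiff_const)
    (hasCompactSupport_sum _ fun j _ => (ha j).2.mul_right)

lemma exists_eq_sum_c11Bound (hG : SDifMem G) :
    ∃ (S : Finset ℕ) (a : ℕ → ℝ → ℝ) (C R : ℕ → ℝ), (∀ j, C11Bound (a j) (C j) (R j)) ∧
      ∀ s u, G s u = ∑ j ∈ S, a j u * s ^ j := by
  obtain ⟨k, a, ha, hGa⟩ := hG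
  choose C R h using fun j =>
    exists_c11Bound_of_hasCompactSupport (contDiff_infty.1 (ha j).1 2) (ha j).2
  exact ⟨_, a, C, R, h, hGa⟩

lemma comp_neg (hG : SDifMem G) : SDifMem fun s u => G s (-u) := by
  obtain ⟨k, a, ha, hGa⟩ := hG
  exact ⟨k, fun j u => a j (-u), fun j => ⟨(ha j).1.comp contDiff_neg,
    (ha j).2.comp_homeomorph (Homeomorph.neg ℝ)⟩, fun s u => hGa s (-u)⟩

lemma sRobMem (hG : SDifMem G) : SRobMem G := ⟨G, G, hG, hG, by simp⟩

end SDifMem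

lemma SNeuMem.sDifMem {G : ℝ → ℝ → ℝ} (hG : SNeuMem G) : SDifMem G := by
  obtain ⟨k, a, _, _, ha, hGa⟩ := hG
  exact ⟨k, a, fun j => ⟨(ha j).1, (ha j).2.1⟩, hGa⟩

lemma biSup_abs_nonneg {ι : Type*} (A : Set ι) (f : ι → ℝ) : 0 ≤ ⨆ i ∈ A, |f i| :=
  Real.iSup_nonneg fun _ => Real.iSup_nonneg fun _ => abs_nonneg _

lemma biSup_Icc_abs_sum_mul_pow_le (hT : 0 ≤ T) (S : Finset ℕ) (e : ℕ → ℝ) :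
    ⨆ s ∈ Icc 0 T, |∑ j ∈ S, e j * s ^ j| ≤ ∑ j ∈ S, |e j| * T ^ j := by
  have bound_nonneg : 0 ≤ ∑ j ∈ S, |e j| * T ^ j := Finset.sum_nonneg fun j _ => by positivity
  refine Real.iSup_le (fun s => Real.iSup_le (fun hs => ?_) bound_nonneg) bound_nonneg
  refine (Finset.abs_sum_le_sum_abs _ _).trans (Finset.sum_le_sum fun j _ => ?_)
  rw [abs_mul, abs_pow, abs_of_nonneg hs.1]
  gcongr
  exacts [hs.1, hs.2]

lemma tendsto_halfLine (hγ : 0 < γ) (hγ' : γ < 2) (c : ℝ) (hT : 0 ≤ T) {G P : ℝ → ℝ → ℝ}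
    (hP : SDifMem P) (hGP : ∀ s, EqOn (G s) (P s) (Ioi 0)) :
    Tendsto (fun n : ℕ => (n : ℝ)⁻¹ * ∑' x : ℕ, ⨆ s ∈ Icc 0 T,
      |halfLineGenerator c γ n (G s) x - regFracLap c γ (Ioi 0) (G s) (((x : ℝ) + 1) / n)|)
      atTop (𝓝 0) := by
  obtain ⟨S, a, C, R, ha, hPa⟩ := hP.exists_eq_sum_c11Bound
  choose K K_nonneg hK using fun j => (ha j).exists_abs_gridError_le hγ hγ'
  have error_eq {n : ℕ} (hn : 0 < n) (x : ℕ) (s : ℝ) :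
      halfLineGenerator c γ n (G s) x - regFracLap c γ (Ioi 0) (G s) (((x : ℝ) + 1) / n) =
        ∑ j ∈ S, c * gridError γ (a j) n (((x : ℝ) + 1) / n) * s ^ j := by
    have u_pos : 0 < ((x : ℝ) + 1) / n := by positivity
    obtain ⟨C', R', h⟩ := hP.exists_c11Bound s
    rw [halfLineGenerator_congr (hGP s) c γ hn,
      regFracLap_congr measurableSet_Ioi c γ (hGP s) u_pos,
      h.halfLineGenerator_sub_regFracLap hγ hγ' c hn, funext (hPa s),
      gridError_sum hγ hγ' ha S _ hn u_pos, Finset.mul_sum]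
    simp only [mul_assoc]
  refine tendsto_inv_mul_tsum_of_le
    (f := fun n u => ∑ j ∈ S, |c * gridError γ (a j) n u| * T ^ j)
    (g := fun u => (∑ j ∈ S, |c| * K j * T ^ j) * majorant γ u)
    (antitoneOn_const_mul_majorant hγ (Finset.sum_nonneg fun j _ => ?_))
    ((integrableOn_majorant hγ hγ').const_mul _) (fun n hn u hu => ?_) (fun u hu => ?_)
    (fun n x => biSup_abs_nonneg _ _) fun n hn x => ?_
  · have := K_nonneg j
    positivity
  · rw [abs_of_nonneg (Finset.sum_nonneg fun j _ => by positivity), Finset.sum_mul]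
    refine Finset.sum_le_sum fun j _ => ?_
    calc |c * gridError γ (a j) n u| * T ^ j ≤ |c| * (K j * majorant γ u) * T ^ j := by
          rw [abs_mul]
          gcongr
          exact hK j n hn u hu
      _ = |c| * K j * T ^ j * majorant γ u := by ring
  · simpa using tendsto_finsetSum S fun j _ =>
      (((ha j).tendsto_gridError hγ hγ' hu).const_mul c).abs.mul_const (T ^ j)
  · simp only [error_eq hn]
    exact biSup_Icc_abs_sum_mul_pow_le hT S _

end TestFunction

section Boundary

variable {γ T : ℝ}

lemma tendsto_rpow_mul_tsum_mul_transP {θ : ℝ} (hθ : γ - 1 < θ) (hθ' : θ < γ) (c : ℝ)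
    {f : ℝ → ℝ} {A : ℝ} (hf : ∀ u, 0 < u → |f u| ≤ A * u ^ θ) :
    Tendsto (fun n : ℕ => (n : ℝ) ^ (γ - 1) *
      ∑' y : ℕ, f (((y : ℝ) + 1) / n) * transP c γ ((y : ℤ) + 1)) atTop (𝓝 0) := by
  have summable : Summable fun y : ℕ => ((y : ℝ) + 1) ^ (θ - γ - 1) := by
    have := (summable_nat_add_iff 1).2 (Real.summable_nat_rpow.2 (by linarith : θ - γ - 1 < -1))
    simpa only [Nat.cast_add, Nat.cast_one] using this
  set J := ∑' y : ℕ, ((y : ℝ) + 1) ^ (θ - γ - 1)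
  have bound_lim : Tendsto (fun n : ℕ => (n : ℝ) ^ (-(θ - (γ - 1))) * (A * |c| * J)) atTop
      (𝓝 0) := by
    simpa only [zero_mul, Function.comp_def] using ((tendsto_rpow_neg_atTop (sub_pos.2 hθ)).comp
      tendsto_natCast_atTop_atTop).mul_const (A * |c| * J)
  refine squeeze_zero_norm' ?_ bound_lim
  filter_upwards [eventually_gt_atTop 0] with n hn
  have n_pos : (0 : ℝ) < n := by exact_mod_cast hn
  have term_le (y : ℕ) : ‖f (((y : ℝ) + 1) / n) * transP c γ ((y : ℤ) + 1)‖ ≤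
      A * |c| * (n : ℝ) ^ (-θ) * ((y : ℝ) + 1) ^ (θ - γ - 1) := by
    have y_pos : (0 : ℝ) < (y : ℝ) + 1 := by positivity
    rw [transP_natCast_add_one, Real.norm_eq_abs, abs_mul, abs_mul,
      abs_of_nonneg (by positivity : 0 ≤ ((y : ℝ) + 1) ^ (-γ - 1))]
    calc |f (((y : ℝ) + 1) / n)| * (|c| * ((y : ℝ) + 1) ^ (-γ - 1)) ≤
          A * (((y : ℝ) + 1) / n) ^ θ * (|c| * ((y : ℝ) + 1) ^ (-γ - 1)) := by
          gcongr
          exact hf _ (by positivity)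
      _ = A * |c| * (n : ℝ) ^ (-θ) * ((y : ℝ) + 1) ^ (θ - γ - 1) := by
          rw [show θ - γ - 1 = θ + (-γ - 1) by ring, Real.rpow_add y_pos,
            Real.div_rpow y_pos.le n_pos.le, Real.rpow_neg n_pos.le]
          ring
  rw [norm_mul, Real.norm_of_nonneg (by positivity)]
  calc (n : ℝ) ^ (γ - 1) * ‖∑' y : ℕ, f (((y : ℝ) + 1) / n) * transP c γ ((y : ℤ) + 1)‖ ≤
        (n : ℝ) ^ (γ - 1) * (A * |c| * (n : ℝ) ^ (-θ) * J) := by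
        gcongr
        exact tsum_of_norm_bounded (summable.hasSum.mul_left _) term_le
    _ = (n : ℝ) ^ (-(θ - (γ - 1))) * (A * |c| * J) := by
        rw [show -(θ - (γ - 1)) = γ - 1 + -θ by ring, Real.rpow_add n_pos]
        ring

lemma tendsto_boundary (hγ : 0 < γ) (hγ' : γ < 2) (c : ℝ) (hT : 0 ≤ T) {G P : ℝ → ℝ → ℝ}
    (hP : SDifMem P) (hGP : ∀ s, EqOn (G s) (P s) (Ici 0)) :
    Tendsto (fun n : ℕ => (n : ℝ) ^ (γ - 1) * ∑' y : ℕ,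
      (⨆ s ∈ Icc 0 T, |G s (((y : ℝ) + 1) / n) - G s 0|) * transP c γ ((y : ℤ) + 1))
      atTop (𝓝 0) := by
  obtain ⟨S, a, C, R, ha, hPa⟩ := hP.exists_eq_sum_c11Bound
  refine tendsto_rpow_mul_tsum_mul_transP (θ := γ / 2) (by linarith) (by linarith) c
    (f := fun u => ⨆ s ∈ Icc 0 T, |G s u - G s 0|) (A := ∑ j ∈ S, 2 * C j * T ^ j) fun u hu => ?_
  have increment_eq (s : ℝ) : G s u - G s 0 = ∑ j ∈ S, (a j u - a j 0) * s ^ j := by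
    rw [hGP s hu.le, hGP s self_mem_Ici, hPa, hPa, ← Finset.sum_sub_distrib]
    simp only [sub_mul]
  simp only [increment_eq]
  rw [abs_of_nonneg (biSup_abs_nonneg _ _), Finset.sum_mul]
  refine (biSup_Icc_abs_sum_mul_pow_le hT S _).trans (Finset.sum_le_sum fun j _ => ?_)
  have holder := (ha j).abs_sub_le_mul_rpow (by linarith : 0 ≤ γ / 2) (by linarith) hu.ne'
  rw [sub_zero, abs_of_pos hu] at holder
  rw [mul_right_comm]
  gcongr

end Boundary

section Reflection

lemma transP_neg_sub_neg (c γ : ℝ) (a b : ℤ) : transP c γ (-a - -b) = transP c γ (a - b) := by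
  rw [← neg_sub', transP_neg]

lemma regFracLap_Iio_neg (c γ : ℝ) (g : ℝ → ℝ) (u : ℝ) :
    regFracLap c γ (Iio 0) g (-u) = regFracLap c γ (Ioi 0) (fun v => g (-v)) u := by
  have domain_eq (ε : ℝ) :
      Neg.neg ⁻¹' (Iio 0 ∩ {v : ℝ | ε ≤ |-u - v|}) = Ioi 0 ∩ {v : ℝ | ε ≤ |u - v|} := by
    ext v
    simp only [mem_preimage, mem_inter_iff, mem_Iio, mem_Ioi, mem_ofPred_eq, neg_lt_zero,
      neg_sub_neg, abs_sub_comm v u]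
  unfold regFracLap
  congr 1
  ext ε
  unfold regFracLapTrunc
  rw [← (Measure.measurePreserving_neg (volume : Measure ℝ)).setIntegral_preimage_emb
    (MeasurableEquiv.neg ℝ).measurableEmbedding, domain_eq]
  simp only [neg_sub_neg, abs_sub_comm _ u]

end Reflection

theorem stmt14_general (γ c T : ℝ) (hγ : γ ∈ Set.Ioo (0 : ℝ) 2) (hT : 0 ≤ T)
    (G : ℝ → ℝ → ℝ) (hG : SRobMem G) :
    Tendsto (fun n : ℕ =>
        (n : ℝ)⁻¹ * (∑' x : ℕ, ⨆ s ∈ Set.Icc (0 : ℝ) T,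
          |(n : ℝ) ^ γ * (∑' y : ℕ,
              (G s (((y : ℝ) + 1) / n) - G s (((x : ℝ) + 1) / n)) *
                transP c γ (((y : ℤ) + 1) - ((x : ℤ) + 1)))
            - regFracLap c γ (Set.Ioi (0 : ℝ)) (G s) (((x : ℝ) + 1) / n)|)
        + (n : ℝ)⁻¹ * (∑' x : ℕ, ⨆ s ∈ Set.Icc (0 : ℝ) T,
          |(n : ℝ) ^ γ * (∑' y : ℕ,
              (G s ((-((y : ℝ) + 1)) / n) - G s ((-((x : ℝ) + 1)) / n)) *
                transP c γ ((-((y : ℤ) + 1)) - (-((x : ℤ) + 1))))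
            - regFracLap c γ (Set.Iio (0 : ℝ)) (G s) ((-((x : ℝ) + 1)) / n)|)
        + (n : ℝ) ^ (γ - 1) * ∑' y : ℕ,
            (⨆ s ∈ Set.Icc (0 : ℝ) T, |G s (((y : ℝ) + 1) / n) - G s 0|) *
              transP c γ ((y : ℤ) + 1))
      atTop (𝓝 0) := by
  obtain ⟨Gm, Gp, hGm, hGp, hG⟩ := hG
  have eq_right (s : ℝ) : EqOn (G s) (Gp s) (Ici 0) := fun u (hu : 0 ≤ u) => by
    rw [hG, if_neg hu.not_gt]
  have eq_left (s : ℝ) : EqOn (fun u => G s (-u)) (fun u => Gm s (-u)) (Ioi 0) :=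
    fun u (hu : 0 < u) => by simp only [hG, if_pos (neg_lt_zero.2 hu)]
  have right := tendsto_halfLine hγ.1 hγ.2 c hT hGp fun s => (eq_right s).mono Ioi_subset_Ici_self
  have left := tendsto_halfLine hγ.1 hγ.2 c hT hGm.comp_neg eq_left
  have boundary := tendsto_boundary hγ.1 hγ.2 c hT hGp eq_right
  simpa only [halfLineGenerator, neg_div, regFracLap_Iio_neg, transP_neg_sub_neg, add_zero] using
    (right.add left).add boundary

theorem stmt14 (γ c T : ℝ) (hγ : γ ∈ Set.Ioo (0 : ℝ) 2) (hc : 0 < c)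
    (hprob : HasSum (transP c γ) 1) (hT : 0 < T)
    (G : ℝ → ℝ → ℝ)
    (hG : (1 < γ ∧ γ < 2 ∧ SRobMem G) ∨ (γ ≤ 1 ∧ SNeuMem G)) :
    Tendsto (fun n : ℕ =>
        -- positive half-line term
        (n : ℝ)⁻¹ * (∑' x : ℕ, ⨆ s ∈ Set.Icc (0 : ℝ) T,
          |(n : ℝ) ^ γ * (∑' y : ℕ,
              (G s (((y : ℝ) + 1) / n) - G s (((x : ℝ) + 1) / n)) *
                transP c γ (((y : ℤ) + 1) - ((x : ℤ) + 1)))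
            - regFracLap c γ (Set.Ioi (0 : ℝ)) (G s) (((x : ℝ) + 1) / n)|)
        -- negative half-line term
        + (n : ℝ)⁻¹ * (∑' x : ℕ, ⨆ s ∈ Set.Icc (0 : ℝ) T,
          |(n : ℝ) ^ γ * (∑' y : ℕ,
              (G s ((-((y : ℝ) + 1)) / n) - G s ((-((x : ℝ) + 1)) / n)) *
                transP c γ ((-((y : ℤ) + 1)) - (-((x : ℤ) + 1))))
            - regFracLap c γ (Set.Iio (0 : ℝ)) (G s) ((-((x : ℝ) + 1)) / n)|)
        -- boundary term
        + (n : ℝ) ^ (γ - 1) * ∑' y : ℕ,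
            (⨆ s ∈ Set.Icc (0 : ℝ) T, |G s (((y : ℝ) + 1) / n) - G s 0|) *
              transP c γ ((y : ℤ) + 1))
      atTop (𝓝 0) := by
  exact stmt14_general γ c T hγ hT.le G (hG.elim (·.2.2) (·.2.sDifMem.sRobMem))
end

section
/- Let γ ∈ (0,2), T > 0 and G ∈ S_Dif. Then there exists a constant C > 0 (depending on G, γ and T but not on n) such that for every n ≥ 1, n^{γ−2} ∑_{x∈ℤ} ∑_{y∈ℤ} sup_{s∈[0,T]} (G(s, y/n) − G(s, x/n))² p(y−x) ≤ C · max{ n^{γ−2}, n^{−1} }. -/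
/-!
Uniformly in `s ∈ [0, T]`, the increment `|G(s, v) - G(s, u)|` is at most `B min(1, |v - u|)`, and
it vanishes unless `u` or `v` lies in a fixed ball of radius `R`. Only `O(n)` lattice points `x`
have `x / n` in that ball, so the double sum is at most a constant times `n` times the truncated
second moment `∑ min(1, |z| / n)² p(z)`. Comparing with telescoping sums of `|z|^(2 - γ)` below `n`
and of `|z|^(-γ)` above `n` shows that this moment is `O(n^(-γ))`, whence the bound
`n^(γ - 2) ⋅ n ⋅ n^(-γ) = n⁻¹`.
-/

open MeasureTheory Filter Set Topology

theorem min_mul_rpow_sub_one_le_sub {β x : ℝ} (hβ : 0 < β) (hx : 1 ≤ x) :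
    min β 1 * x ^ (β - 1) ≤ x ^ β - (x - 1) ^ β := by
  have hx0 : 0 < x := by linarith
  have hinv : x⁻¹ ≤ 1 := inv_le_one_of_one_le₀ hx
  have hmin : 0 ≤ min β 1 := le_min hβ.le zero_le_one
  -- The Bernoulli inequality needs an exponent in `[0, 1]`, hence the `min`.
  have bernoulli : (1 + -x⁻¹) ^ β ≤ 1 + min β 1 * -x⁻¹ :=
    calc (1 + -x⁻¹) ^ β ≤ (1 + -x⁻¹) ^ min β 1 :=
          Real.rpow_le_rpow_of_exponent_ge' (by linarith) (by linarith [inv_pos.2 hx0]) hmin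
            (min_le_left _ _)
      _ ≤ 1 + min β 1 * -x⁻¹ :=
          rpow_one_add_le_one_add_mul_self (by linarith) hmin (min_le_right _ _)
  have hscaled := mul_le_mul_of_nonneg_left bernoulli (Real.rpow_nonneg hx0.le β)
  rw [show x - 1 = x * (1 + -x⁻¹) by field_simp; ring, Real.mul_rpow hx0.le (by linarith),
    Real.rpow_sub_one hx0.ne', div_eq_mul_inv]
  linarith

theorem mul_rpow_neg_sub_one_le_sub {γ x : ℝ} (hγ : 0 ≤ γ) (hx : 1 < x) :
    γ * x ^ (-γ - 1) ≤ (x - 1) ^ (-γ) - x ^ (-γ) := by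
  have hx0 : 0 < x := by linarith
  have hinv : 0 < 1 - x⁻¹ := sub_pos.2 (inv_lt_one_of_one_lt₀ hx)
  have bernoulli : 1 + γ * x⁻¹ ≤ (1 - x⁻¹) ^ (-γ) :=
    calc 1 + γ * x⁻¹ ≤ Real.exp (γ * x⁻¹) := by linarith [Real.add_one_le_exp (γ * x⁻¹)]
      _ = Real.exp (-x⁻¹) ^ (-γ) := by rw [← Real.exp_mul]; ring_nf
      _ ≤ (1 - x⁻¹) ^ (-γ) :=
          Real.rpow_le_rpow_of_nonpos hinv (Real.one_sub_le_exp_neg x⁻¹) (by linarith)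
  have hscaled := mul_le_mul_of_nonneg_left bernoulli (Real.rpow_nonneg hx0.le (-γ))
  rw [show x - 1 = x * (1 - x⁻¹) by field_simp, Real.mul_rpow hx0.le hinv.le,
    Real.rpow_sub_one hx0.ne', div_eq_mul_inv]
  linarith

theorem sum_range_rpow_sub_one_le {β : ℝ} (hβ : 0 < β) (N : ℕ) :
    ∑ i ∈ Finset.range N, ((i : ℝ) + 1) ^ (β - 1) ≤ (min β 1)⁻¹ * (N : ℝ) ^ β := by
  have hstep (i : ℕ) : ((i : ℝ) + 1) ^ (β - 1)
      ≤ (min β 1)⁻¹ * (((i + 1 : ℕ) : ℝ) ^ β - (i : ℝ) ^ β) := by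
    rw [le_inv_mul_iff₀ (lt_min hβ one_pos)]
    simpa using min_mul_rpow_sub_one_le_sub (x := (i : ℝ) + 1) hβ (by simp)
  calc ∑ i ∈ Finset.range N, ((i : ℝ) + 1) ^ (β - 1)
      ≤ ∑ i ∈ Finset.range N, (min β 1)⁻¹ * (((i + 1 : ℕ) : ℝ) ^ β - (i : ℝ) ^ β) :=
        Finset.sum_le_sum fun i _ ↦ hstep i
    _ = (min β 1)⁻¹ * (N : ℝ) ^ β := by
        rw [← Finset.mul_sum, Finset.sum_range_sub fun i : ℕ ↦ (i : ℝ) ^ β, Nat.cast_zero,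
          Real.zero_rpow hβ.ne', sub_zero]

theorem sum_Ico_rpow_neg_sub_one_le {γ : ℝ} (hγ : 0 < γ) {m N : ℕ} (hm : 1 ≤ m) (hmN : m ≤ N) :
    ∑ i ∈ Finset.Ico m N, ((i : ℝ) + 1) ^ (-γ - 1) ≤ γ⁻¹ * (m : ℝ) ^ (-γ) := by
  have hstep (i : ℕ) (hi : i ∈ Finset.Ico m N) : ((i : ℝ) + 1) ^ (-γ - 1)
      ≤ γ⁻¹ * -(((i + 1 : ℕ) : ℝ) ^ (-γ) - (i : ℝ) ^ (-γ)) := by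
    have hi0 : (0 : ℝ) < i := by exact_mod_cast hm.trans (Finset.mem_Ico.1 hi).1
    rw [le_inv_mul_iff₀ hγ]
    simpa using mul_rpow_neg_sub_one_le_sub (x := (i : ℝ) + 1) hγ.le (by linarith)
  calc ∑ i ∈ Finset.Ico m N, ((i : ℝ) + 1) ^ (-γ - 1)
      ≤ ∑ i ∈ Finset.Ico m N, γ⁻¹ * -(((i + 1 : ℕ) : ℝ) ^ (-γ) - (i : ℝ) ^ (-γ)) :=
        Finset.sum_le_sum hstep
    _ = γ⁻¹ * ((m : ℝ) ^ (-γ) - (N : ℝ) ^ (-γ)) := by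
        rw [← Finset.mul_sum, Finset.sum_neg_distrib,
          Finset.sum_Ico_sub (fun i : ℕ ↦ (i : ℝ) ^ (-γ)) hmN, neg_sub]
    _ ≤ γ⁻¹ * (m : ℝ) ^ (-γ) := by
        gcongr
        exact sub_le_self _ (by positivity)

theorem sum_range_div_sq_mul_rpow_le {γ : ℝ} (hγ : γ < 2) {n : ℕ} (hn : 1 ≤ n) :
    ∑ i ∈ Finset.range n, (((i : ℝ) + 1) / n) ^ 2 * ((i : ℝ) + 1) ^ (-γ - 1)
      ≤ (min (2 - γ) 1)⁻¹ * (n : ℝ) ^ (-γ) := by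
  have hn0 : (0 : ℝ) < n := by exact_mod_cast hn
  have hterm (i : ℕ) : (((i : ℝ) + 1) / n) ^ 2 * ((i : ℝ) + 1) ^ (-γ - 1)
      = ((i : ℝ) + 1) ^ (2 - γ - 1) / (n : ℝ) ^ 2 := by
    rw [show 2 - γ - 1 = 2 + (-γ - 1) by ring, Real.rpow_add (by positivity), Real.rpow_two]
    ring
  calc ∑ i ∈ Finset.range n, (((i : ℝ) + 1) / n) ^ 2 * ((i : ℝ) + 1) ^ (-γ - 1)
      = (∑ i ∈ Finset.range n, ((i : ℝ) + 1) ^ (2 - γ - 1)) / (n : ℝ) ^ 2 := by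
        simp only [hterm, Finset.sum_div]
    _ ≤ (min (2 - γ) 1)⁻¹ * (n : ℝ) ^ (2 - γ) / (n : ℝ) ^ 2 := by
        gcongr
        exact sum_range_rpow_sub_one_le (sub_pos.2 hγ) n
    _ = (min (2 - γ) 1)⁻¹ * (n : ℝ) ^ (-γ) := by
        rw [show 2 - γ = 2 + -γ by ring, Real.rpow_add hn0, Real.rpow_two]
        field_simp

theorem sum_range_min_sq_mul_rpow_le {γ : ℝ} (hγ : γ ∈ Set.Ioo (0 : ℝ) 2) {n : ℕ} (hn : 1 ≤ n)
    (N : ℕ) :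
    ∑ i ∈ Finset.range N, min 1 (((i : ℝ) + 1) / n) ^ 2 * ((i : ℝ) + 1) ^ (-γ - 1)
      ≤ ((min (2 - γ) 1)⁻¹ + γ⁻¹) * (n : ℝ) ^ (-γ) := by
  set f : ℕ → ℝ := fun i ↦ min 1 (((i : ℝ) + 1) / n) ^ 2 * ((i : ℝ) + 1) ^ (-γ - 1) with hf
  have hnear : ∑ i ∈ Finset.range n, f i ≤ (min (2 - γ) 1)⁻¹ * (n : ℝ) ^ (-γ) :=
    calc ∑ i ∈ Finset.range n, f i
        ≤ ∑ i ∈ Finset.range n, (((i : ℝ) + 1) / n) ^ 2 * ((i : ℝ) + 1) ^ (-γ - 1) := by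
          simp only [hf]
          gcongr
          exact min_le_right _ _
      _ ≤ (min (2 - γ) 1)⁻¹ * (n : ℝ) ^ (-γ) := sum_range_div_sq_mul_rpow_le hγ.2 hn
  have hfar : ∑ i ∈ Finset.Ico n (max n N), f i ≤ γ⁻¹ * (n : ℝ) ^ (-γ) :=
    calc ∑ i ∈ Finset.Ico n (max n N), f i
        ≤ ∑ i ∈ Finset.Ico n (max n N), ((i : ℝ) + 1) ^ (-γ - 1) :=
          Finset.sum_le_sum fun i _ ↦ mul_le_of_le_one_left (by positivity)
            (pow_le_one₀ (by positivity) (min_le_left _ _))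
      _ ≤ γ⁻¹ * (n : ℝ) ^ (-γ) := sum_Ico_rpow_neg_sub_one_le hγ.1 hn (le_max_left _ _)
  calc ∑ i ∈ Finset.range N, f i ≤ ∑ i ∈ Finset.range (max n N), f i :=
        Finset.sum_le_sum_of_subset_of_nonneg (Finset.range_mono (le_max_right _ _))
          fun i _ _ ↦ by positivity
    _ = ∑ i ∈ Finset.range n, f i + ∑ i ∈ Finset.Ico n (max n N), f i :=
        (Finset.sum_range_add_sum_Ico f (le_max_left _ _)).symm
    _ ≤ ((min (2 - γ) 1)⁻¹ + γ⁻¹) * (n : ℝ) ^ (-γ) := by linarith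

/-- The kernel `p` damped by `min(1, |z| / r)²`. Its total mass is the second moment of `p`
truncated at scale `r`, in units of `r²`. -/
noncomputable def truncSqWeight (p : ℤ → ℝ) (r : ℝ) (z : ℤ) : ℝ :=
  min 1 |(z : ℝ) / r| ^ 2 * p z

theorem truncSqWeight_nonneg {p : ℤ → ℝ} (hp : 0 ≤ p) (r : ℝ) : 0 ≤ truncSqWeight p r :=
  fun z ↦ mul_nonneg (sq_nonneg _) (hp z)

theorem transP_nonneg {c : ℝ} (hc : 0 ≤ c) (γ : ℝ) : 0 ≤ transP c γ := fun z ↦ by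
  unfold transP
  split_ifs
  · exact le_rfl
  · positivity

theorem truncSqWeight_transP_neg (c γ r : ℝ) (z : ℤ) :
    truncSqWeight (transP c γ) r (-z) = truncSqWeight (transP c γ) r z := by
  simp only [truncSqWeight, transP, neg_eq_zero, Int.cast_neg, neg_div, abs_neg]

theorem truncSqWeight_transP_add_one (c γ : ℝ) (n i : ℕ) :
    truncSqWeight (transP c γ) n (i + 1)
      = c * (min 1 (((i : ℝ) + 1) / n) ^ 2 * ((i : ℝ) + 1) ^ (-γ - 1)) := by
  have hne : (i : ℤ) + 1 ≠ 0 := by omega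
  rw [truncSqWeight, transP, if_neg hne]
  push_cast
  rw [abs_of_nonneg (by positivity), abs_of_nonneg (by positivity)]
  ring

theorem hasSum_truncSqWeight_transP {γ : ℝ} (hγ : γ ∈ Set.Ioo (0 : ℝ) 2) (c : ℝ) {n : ℕ}
    (hn : 1 ≤ n) :
    HasSum (truncSqWeight (transP c γ) n)
      (2 * c * ∑' i : ℕ, min 1 (((i : ℝ) + 1) / n) ^ 2 * ((i : ℝ) + 1) ^ (-γ - 1)) := by
  have hpos := (summable_of_sum_range_le (fun i ↦ by positivity)
    (sum_range_min_sq_mul_rpow_le hγ hn)).hasSum.mul_left c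
  simp only [← truncSqWeight_transP_add_one] at hpos
  have hzero : truncSqWeight (transP c γ) n 0 = 0 := by simp [truncSqWeight, transP]
  have h := hpos.of_add_one_of_neg_add_one (by simpa only [truncSqWeight_transP_neg] using hpos)
  rwa [hzero, add_zero, ← two_mul, ← mul_assoc] at h

theorem tsum_truncSqWeight_transP_le {γ c : ℝ} (hγ : γ ∈ Set.Ioo (0 : ℝ) 2) (hc : 0 ≤ c) {n : ℕ}
    (hn : 1 ≤ n) :
    ∑' z, truncSqWeight (transP c γ) n z
      ≤ 2 * c * ((min (2 - γ) 1)⁻¹ + γ⁻¹) * (n : ℝ) ^ (-γ) := by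
  rw [(hasSum_truncSqWeight_transP hγ c hn).tsum_eq, mul_assoc (2 * c)]
  gcongr
  exact Real.tsum_le_of_sum_range_le (fun i ↦ by positivity) (sum_range_min_sq_mul_rpow_le hγ hn)

theorem hasSum_add_mul_sub {A : Type*} [AddGroup A] {f w : A → ℝ} {F W : ℝ} (hf0 : 0 ≤ f)
    (hw0 : 0 ≤ w) (hf : HasSum f F) (hw : HasSum w W) :
    HasSum (fun q : A × A ↦ (f q.1 + f q.2) * w (q.2 - q.1)) (2 * (F * W)) := by
  have hprod := hf.mul hw (hf.summable.mul_of_nonneg hw.summable hf0 hw0)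
  have hfst : HasSum (fun q : A × A ↦ f q.1 * w (q.2 - q.1)) (F * W) :=
    (Equiv.prodShear (Equiv.refl A) Equiv.subRight).hasSum_iff.2 hprod
  have hsnd : HasSum (fun q : A × A ↦ f q.2 * w (q.2 - q.1)) (F * W) :=
    ((Equiv.prodComm A A).trans (Equiv.prodShear (Equiv.refl A) Equiv.subLeft)).hasSum_iff.2 hprod
  simpa only [add_mul, two_mul] using hfst.add hsnd

theorem hasSum_indicator_closedBall_intCast_div {R r : ℝ} (hR : 0 ≤ R) (hr : 0 < r) :
    HasSum (fun x : ℤ ↦ (Metric.closedBall (0 : ℝ) R).indicator (1 : ℝ → ℝ) (x / r))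
      (2 * ⌊R * r⌋ + 1) := by
  set I : Finset ℤ := Finset.Icc (-⌊R * r⌋) ⌊R * r⌋ with hI
  have hmem (x : ℤ) : (x : ℝ) / r ∈ Metric.closedBall 0 R ↔ x ∈ I := by
    rw [mem_closedBall_zero_iff, Real.norm_eq_abs, abs_div, abs_of_pos hr, div_le_iff₀ hr, hI,
      Finset.mem_Icc, ← abs_le, Int.le_floor, Int.cast_abs]
  have hcard : (I.card : ℝ) = 2 * ⌊R * r⌋ + 1 := by
    have hfloor : 0 ≤ ⌊R * r⌋ := Int.floor_nonneg.2 (by positivity)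
    have h : (I.card : ℤ) = 2 * ⌊R * r⌋ + 1 := by
      rw [hI, Int.card_Icc]
      omega
    exact_mod_cast h
  have hsum : ∑ x ∈ I, (Metric.closedBall (0 : ℝ) R).indicator (1 : ℝ → ℝ) (x / r) = I.card := by
    rw [Finset.cast_card]
    exact Finset.sum_congr rfl fun x hx ↦ Set.indicator_of_mem ((hmem x).2 hx) _
  rw [← hcard, ← hsum]
  exact hasSum_sum_of_ne_finset_zero fun x hx ↦ Set.indicator_of_notMem (mt (hmem x).1 hx) _

section Increments

variable {ι : Type*}

/-- The largest squared increment `sup_{s ∈ S} (G(s, v) - G(s, u))²` of a family of functions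
`G(s, ·)`. For `s ∉ S` the inner supremum is over the empty set, hence `0`, which is
harmless because squares are nonnegative; the value is junk if the squares are unbounded. -/
noncomputable def supSqIncrement (G : ι → ℝ → ℝ) (S : Set ι) (u v : ℝ) : ℝ :=
  ⨆ s ∈ S, (G s v - G s u) ^ 2

theorem supSqIncrement_nonneg (G : ι → ℝ → ℝ) (S : Set ι) (u v : ℝ) :
    0 ≤ supSqIncrement G S u v :=
  Real.iSup_nonneg fun _ ↦ Real.iSup_nonneg fun _ ↦ sq_nonneg _

variable {G : ι → ℝ → ℝ} {S : Set ι}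

theorem supSqIncrement_le_sq {u v b : ℝ} (h : ∀ s ∈ S, |G s v - G s u| ≤ b) :
    supSqIncrement G S u v ≤ b ^ 2 :=
  Real.iSup_le (fun s ↦ Real.iSup_le (fun hs ↦ sq_le_sq.2 ((h s hs).trans (le_abs_self b)))
    (sq_nonneg b)) (sq_nonneg b)

theorem supSqIncrement_le_sq_mul_indicator {K : Set ℝ} {u v b : ℝ}
    (h : ∀ s ∈ S, |G s v - G s u| ≤ b) (hK : ∀ s ∈ S, Function.support (G s) ⊆ K) :
    supSqIncrement G S u v ≤ b ^ 2 * (K.indicator 1 u + K.indicator 1 v) := by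
  have hind (x : ℝ) : 0 ≤ K.indicator (1 : ℝ → ℝ) x :=
    Set.indicator_nonneg (fun _ _ ↦ zero_le_one) x
  by_cases huv : u ∈ K ∨ v ∈ K
  · have hone : 1 ≤ K.indicator (1 : ℝ → ℝ) u + K.indicator 1 v := by
      rcases huv with hu | hv
      · simpa [Set.indicator_of_mem hu] using hind v
      · simpa [Set.indicator_of_mem hv] using hind u
    exact (supSqIncrement_le_sq h).trans (le_mul_of_one_le_right (sq_nonneg b) hone)
  · have hzero (s : ι) (hs : s ∈ S) (x : ℝ) (hx : x ∉ K) : G s x = 0 :=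
      Function.notMem_support.1 (Set.notMem_subset (hK s hs) hx)
    push Not at huv
    calc supSqIncrement G S u v ≤ 0 ^ 2 := supSqIncrement_le_sq fun s hs ↦ by
          rw [hzero s hs u huv.1, hzero s hs v huv.2, sub_zero, abs_zero]
      _ ≤ b ^ 2 * (K.indicator 1 u + K.indicator 1 v) := by
          rw [zero_pow two_ne_zero]
          exact mul_nonneg (sq_nonneg b) (add_nonneg (hind u) (hind v))

theorem summable_and_tsum_supSqIncrement_mul_le {p : ℤ → ℝ} {B R r : ℝ} (hp : 0 ≤ p) (hR : 0 ≤ R)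
    (hr : 0 < r) (hB : ∀ s ∈ S, ∀ u v, |G s v - G s u| ≤ B * min 1 |v - u|)
    (hsupp : ∀ s ∈ S, Function.support (G s) ⊆ Metric.closedBall 0 R)
    (hmom : Summable (truncSqWeight p r)) :
    Summable (fun q : ℤ × ℤ ↦ supSqIncrement G S (q.1 / r) (q.2 / r) * p (q.2 - q.1)) ∧
      ∑' q : ℤ × ℤ, supSqIncrement G S (q.1 / r) (q.2 / r) * p (q.2 - q.1)
        ≤ B ^ 2 * (2 * ((2 * ⌊R * r⌋ + 1) * ∑' z, truncSqWeight p r z)) := by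
  set χ : ℝ → ℝ := (Metric.closedBall 0 R).indicator 1
  have hdom (q : ℤ × ℤ) : supSqIncrement G S (q.1 / r) (q.2 / r) * p (q.2 - q.1)
      ≤ B ^ 2 * ((χ (q.1 / r) + χ (q.2 / r)) * truncSqWeight p r (q.2 - q.1)) :=
    calc _ ≤ (B * min 1 |(q.2 : ℝ) / r - q.1 / r|) ^ 2 * (χ (q.1 / r) + χ (q.2 / r))
          * p (q.2 - q.1) :=
          mul_le_mul_of_nonneg_right
            (supSqIncrement_le_sq_mul_indicator (fun s hs ↦ hB s hs _ _) hsupp) (hp _)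
      _ = _ := by
          rw [truncSqWeight, ← sub_div, Int.cast_sub]
          ring
  have hsum := (hasSum_add_mul_sub
    (fun _ ↦ Set.indicator_nonneg (fun _ _ ↦ zero_le_one) _) (truncSqWeight_nonneg hp r)
    (hasSum_indicator_closedBall_intCast_div hR hr) hmom.hasSum).mul_left (B ^ 2)
  have hsummable : Summable fun q : ℤ × ℤ ↦
      supSqIncrement G S (q.1 / r) (q.2 / r) * p (q.2 - q.1) :=
    hsum.summable.of_nonneg_of_le
      (fun q ↦ mul_nonneg (supSqIncrement_nonneg G S _ _) (hp _)) hdom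
  exact ⟨hsummable, hsum.tsum_eq ▸ hsummable.tsum_le_tsum hdom hsum.summable⟩

end Increments

theorem abs_le_mul_of_lipschitzWith {f : ℝ → ℝ} {L : NNReal} {R : ℝ} (hR : 0 ≤ R)
    (hf : LipschitzWith L f) (hsupp : Function.support f ⊆ Metric.closedBall 0 R) (u : ℝ) :
    |f u| ≤ L * (2 * R + 1) := by
  by_cases hu : u ∈ Metric.closedBall 0 R
  · have hend : f (R + 1) = 0 := Function.notMem_support.1 fun h ↦ by
      have := le_of_abs_le (mem_closedBall_zero_iff.1 (hsupp h))
      linarith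
    have hdist : |u - (R + 1)| ≤ 2 * R + 1 := by
      have := abs_le.1 (mem_closedBall_zero_iff.1 hu)
      exact abs_le.2 ⟨by linarith, by linarith⟩
    calc |f u| = |f u - f (R + 1)| := by rw [hend, sub_zero]
      _ ≤ L * |u - (R + 1)| := hf.dist_le_mul _ _
      _ ≤ L * (2 * R + 1) := by gcongr
  · rw [Function.notMem_support.1 (Set.notMem_subset hsupp hu), abs_zero]
    positivity

theorem abs_sub_le_mul_min_of_lipschitzWith {f : ℝ → ℝ} {L : NNReal} {R : ℝ} (hR : 0 ≤ R)
    (hf : LipschitzWith L f) (hsupp : Function.support f ⊆ Metric.closedBall 0 R) (u v : ℝ) :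
    |f v - f u| ≤ 2 * L * (2 * R + 1) * min 1 |v - u| := by
  have hbound := abs_le_mul_of_lipschitzWith hR hf hsupp
  rcases le_total 1 |v - u| with hfar | hnear
  · rw [min_eq_left hfar]
    linarith [abs_sub (f v) (f u), hbound v, hbound u]
  · rw [min_eq_right hnear]
    have hL : (L : ℝ) ≤ 2 * L * (2 * R + 1) := by nlinarith [L.coe_nonneg]
    exact (hf.dist_le_mul v u).trans (mul_le_mul_of_nonneg_right hL (abs_nonneg _))

theorem lipschitzWith_sum_mul_pow {a : ℕ → ℝ → ℝ} {L : ℕ → NNReal} {N : ℕ}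
    (ha : ∀ j, LipschitzWith (L j) (a j)) {s : ℝ} {T : NNReal} (hs : s ∈ Set.Icc (0 : ℝ) T) :
    LipschitzWith (∑ j ∈ Finset.range N, L j * T ^ j)
      (fun u ↦ ∑ j ∈ Finset.range N, a j u * s ^ j) := by
  refine LipschitzWith.of_dist_le_mul fun u v ↦ ?_
  push_cast
  rw [Finset.sum_mul]
  refine (dist_sum_sum_le _ _ _).trans (Finset.sum_le_sum fun j _ ↦ ?_)
  have hpow : s ^ j ≤ (T : ℝ) ^ j := pow_le_pow_left₀ hs.1 hs.2 j
  calc dist (a j u * s ^ j) (a j v * s ^ j) = dist (a j u) (a j v) * s ^ j := by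
        rw [Real.dist_eq, Real.dist_eq, ← sub_mul, abs_mul, abs_of_nonneg (pow_nonneg hs.1 j)]
    _ ≤ (L j * dist u v) * T ^ j := by
        gcongr
        · exact pow_nonneg hs.1 j
        · exact (ha j).dist_le_mul u v
    _ = L j * T ^ j * dist u v := by ring

theorem SDifMem.exists_lipschitzWith {G : ℝ → ℝ → ℝ} (hG : SDifMem G) (T : ℝ) :
    ∃ L, ∀ s ∈ Set.Icc (0 : ℝ) T, LipschitzWith L (G s) := by
  obtain ⟨k, a, ha, hGa⟩ := hG
  choose L hL using fun j ↦
    (ha j).1.lipschitzWith_of_hasCompactSupport (ha j).2 (by simp)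
  refine ⟨∑ j ∈ Finset.range (k + 1), L j * T.toNNReal ^ j, fun s hs ↦ ?_⟩
  rw [show G s = _ from funext (hGa s)]
  exact lipschitzWith_sum_mul_pow hL ⟨hs.1, hs.2.trans (Real.le_coe_toNNReal T)⟩

theorem SDifMem.exists_isBounded_support_subset {G : ℝ → ℝ → ℝ} (hG : SDifMem G) :
    ∃ K : Set ℝ, Bornology.IsBounded K ∧ ∀ s, Function.support (G s) ⊆ K := by
  obtain ⟨k, a, ha, hGa⟩ := hG
  refine ⟨⋃ j ∈ Finset.range (k + 1), tsupport (a j),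
    (Bornology.isBounded_biUnion_finset _).2 fun j _ ↦ (ha j).2.isCompact.isBounded,
    fun s u hu ↦ ?_⟩
  rw [Function.mem_support, hGa] at hu
  obtain ⟨j, hj, hne⟩ := Finset.exists_ne_zero_of_sum_ne_zero hu
  exact Set.mem_biUnion hj (subset_tsupport _ (left_ne_zero_of_mul hne))

theorem rpow_sub_two_mul_mul_rpow_neg {x : ℝ} (hx : 0 < x) (γ : ℝ) :
    x ^ (γ - 2) * (x * x ^ (-γ)) = x⁻¹ := by
  calc x ^ (γ - 2) * (x * x ^ (-γ))
      = x ^ (γ - 2) * (x ^ (1 : ℝ) * x ^ (-γ)) := by rw [Real.rpow_one]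
    _ = x ^ (γ - 2 + (1 + -γ)) := by rw [← Real.rpow_add hx, ← Real.rpow_add hx]
    _ = x⁻¹ := by rw [show γ - 2 + (1 + -γ) = -1 by ring, Real.rpow_neg_one]

theorem stmt16_general {ι : Type*} {γ c : ℝ} (hγ : γ ∈ Set.Ioo (0 : ℝ) 2) (hc : 0 ≤ c)
    {G : ι → ℝ → ℝ} {S : Set ι} {L : NNReal} {K : Set ℝ} (hK : Bornology.IsBounded K)
    (hlip : ∀ s ∈ S, LipschitzWith L (G s)) (hsupp : ∀ s ∈ S, Function.support (G s) ⊆ K) :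
    ∃ C : ℝ, 0 < C ∧ ∀ n : ℕ, 1 ≤ n →
      Summable (fun q : ℤ × ℤ ↦
        supSqIncrement G S ((q.1 : ℝ) / n) ((q.2 : ℝ) / n) * transP c γ (q.2 - q.1)) ∧
      (n : ℝ) ^ (γ - 2) * ∑' q : ℤ × ℤ,
          supSqIncrement G S ((q.1 : ℝ) / n) ((q.2 : ℝ) / n) * transP c γ (q.2 - q.1)
        ≤ C * (n : ℝ)⁻¹ := by
  obtain ⟨R, hR, hKR⟩ := hK.subset_closedBall_lt 0 0
  set B : ℝ := 2 * L * (2 * R + 1)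
  set A : ℝ := 2 * c * ((min (2 - γ) 1)⁻¹ + γ⁻¹)
  have hA0 : 0 ≤ A := by
    have := hγ.1
    have : 0 < min (2 - γ) 1 := lt_min (sub_pos.2 hγ.2) one_pos
    positivity
  refine ⟨B ^ 2 * (2 * ((2 * R + 1) * A)) + 1, by positivity, fun n hn ↦ ?_⟩
  have hn1 : (1 : ℝ) ≤ n := by exact_mod_cast hn
  have hn0 : (0 : ℝ) < n := by linarith
  obtain ⟨hsummable, hle⟩ := summable_and_tsum_supSqIncrement_mul_le (transP_nonneg hc γ) hR.le hn0
    (fun s hs ↦ abs_sub_le_mul_min_of_lipschitzWith hR.le (hlip s hs) ((hsupp s hs).trans hKR))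
    (fun s hs ↦ (hsupp s hs).trans hKR) (hasSum_truncSqWeight_transP hγ c hn).summable
  refine ⟨hsummable, ?_⟩
  have hcount : (2 * ⌊R * n⌋ + 1 : ℝ) ≤ (2 * R + 1) * n := by linarith [Int.floor_le (R * n)]
  have hmom : ∑' z, truncSqWeight (transP c γ) n z ≤ A * (n : ℝ) ^ (-γ) :=
    tsum_truncSqWeight_transP_le hγ hc hn
  have hmom0 : 0 ≤ ∑' z, truncSqWeight (transP c γ) n z :=
    tsum_nonneg (truncSqWeight_nonneg (transP_nonneg hc γ) n)
  calc _ ≤ (n : ℝ) ^ (γ - 2) * (B ^ 2 * (2 * ((2 * R + 1) * n * (A * (n : ℝ) ^ (-γ))))) := by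
        refine mul_le_mul_of_nonneg_left (hle.trans ?_) (by positivity)
        gcongr
    _ = B ^ 2 * (2 * ((2 * R + 1) * A)) * ((n : ℝ) ^ (γ - 2) * (n * (n : ℝ) ^ (-γ))) := by ring
    _ ≤ (B ^ 2 * (2 * ((2 * R + 1) * A)) + 1) * (n : ℝ)⁻¹ := by
        rw [rpow_sub_two_mul_mul_rpow_neg hn0]
        gcongr
        linarith

theorem stmt16 (γ c T : ℝ) (hγ : γ ∈ Set.Ioo (0 : ℝ) 2) (hc : 0 < c)
    (hprob : HasSum (transP c γ) 1) (hT : 0 < T)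
    (G : ℝ → ℝ → ℝ) (hG : SDifMem G) :
    ∃ C : ℝ, 0 < C ∧ ∀ n : ℕ, 1 ≤ n →
      (n : ℝ) ^ (γ - 2) * ∑' q : ℤ × ℤ,
          (⨆ s ∈ Set.Icc (0 : ℝ) T,
            (G s ((q.2 : ℝ) / n) - G s ((q.1 : ℝ) / n)) ^ 2) * transP c γ (q.2 - q.1)
        ≤ C * max ((n : ℝ) ^ (γ - 2)) ((n : ℝ)⁻¹) := by
  obtain ⟨L, hL⟩ := hG.exists_lipschitzWith T
  obtain ⟨K, hK, hGK⟩ := hG.exists_isBounded_support_subset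
  obtain ⟨C, hC, h⟩ := stmt16_general hγ hc.le hK hL fun s _ ↦ hGK s
  exact ⟨C, hC, fun n hn ↦ (h n hn).2.trans
    (mul_le_mul_of_nonneg_left (le_max_right _ _) hC.le)⟩
end

section
/- Let γ ∈ (1,2), T > 0 and G ∈ S_Rob, with G(s,0⁻) := G₋(s,0) and G(s,0⁺) := G₊(s,0). Then lim_{n→∞} sup_{s∈[0,T]} | ∑_{z=0}^∞ ∑_{x=−∞}^{−1} p(z−x) ( (G(s, z/n) − G(s, x/n)) − (G(s,0⁺) − G(s,0⁻)) ) | = 0. -/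
open MeasureTheory Filter Set Topology

/-! The weights `p(z - x)`, `x < 0 ≤ z`, are summable because each distance `t` occurs for `t` pairs
`(z, x)` and `∑ t p(t) < ∞`. Each term of the series tends to `0` uniformly in time, since `G` has
uniform one-sided limits at the origin, and is dominated by a multiple of its weight. Dominated
convergence for series, along a filter that encodes uniformity in time, gives the claim. -/

/-- `G ∈ S_Rob` with left part `Gm = G₋` and right part `Gp = G₊`. The two parts are kept as
parameters because `G` does not determine them away from their own half-lines, whereas the traces
`G(s,0⁻) = Gm s 0` and `G(s,0⁺) = Gp s 0` are read off from them. -/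
structure SRobDecomposition (G Gm Gp : ℝ → ℝ → ℝ) : Prop where
  left : SDifMem Gm
  right : SDifMem Gp
  eq_ite : ∀ t u : ℝ, G t u = if u < 0 then Gm t u else Gp t u

section UniformLimits

variable {α ι κ E : Type*} [NormedAddCommGroup E] {l : Filter α} {S : Set ι}

lemma tendsto_biSup_norm_of_tendstoUniformlyOn {F : α → ι → E}
    (hF : TendstoUniformlyOn F 0 l S) : Tendsto (fun a => ⨆ s ∈ S, ‖F a s‖) l (𝓝 0) := by
  have iSup_nonneg (a : α) : 0 ≤ ⨆ s ∈ S, ‖F a s‖ :=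
    Real.iSup_nonneg fun s => Real.iSup_nonneg fun _ => norm_nonneg _
  refine Metric.tendsto_nhds.2 fun ε hε => ?_
  filter_upwards [SeminormedAddGroup.tendstoUniformlyOn_zero.1 hF (ε / 2) (half_pos hε)] with a ha
  rw [Real.dist_0_eq_abs, abs_of_nonneg (iSup_nonneg a)]
  have iSup_le : ⨆ s ∈ S, ‖F a s‖ ≤ ε / 2 :=
    Real.iSup_le (fun s => Real.iSup_le (fun hs => (ha s hs).le) (half_pos hε).le) (half_pos hε).le
  exact iSup_le.trans_lt (half_lt_self hε)

-- Uniform convergence to a constant is convergence along `l ×ˢ 𝓟 S`, so Tannery's theorem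
-- applies along that filter.
lemma tendstoUniformlyOn_tsum_of_dominated [CompleteSpace E] {f : α → ι → κ → E} {g : κ → E}
    {bound : κ → ℝ} (hbound : Summable bound)
    (hlim : ∀ k, TendstoUniformlyOn (fun a s => f a s k) (fun _ => g k) l S)
    (hle : ∀ᶠ a in l, ∀ s ∈ S, ∀ k, ‖f a s k‖ ≤ bound k) :
    TendstoUniformlyOn (fun a s => ∑' k, f a s k) (fun _ => ∑' k, g k) l S := by
  refine tendsto_prod_principal_iff.1 (tendsto_tsum_of_dominated_convergence hbound
    (f := fun q : α × ι => f q.1 q.2) (fun k => tendsto_prod_principal_iff.2 (hlim k)) ?_)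
  filter_upwards [prod_mem_prod hle (mem_principal_self S)] with q hq
  exact hq.1 q.2 hq.2

end UniformLimits

lemma summable_prod_add_add_one {E : Type*} [NormedAddCommGroup E] [CompleteSpace E] {f : ℕ → E}
    (hf : Summable fun t : ℕ => (t : ℝ) * ‖f t‖) :
    Summable fun q : ℕ × ℕ => f (q.1 + q.2 + 1) := by
  have tsum_fibre (t : ℕ) :
      ∑' q : Finset.HasAntidiagonal.antidiagonal t, ‖f (q.1.1 + q.1.2 + 1)‖ =
        (t + 1 : ℕ) * ‖f (t + 1)‖ := by
    rw [Finset.tsum_subtype _ fun q : ℕ × ℕ => ‖f (q.1 + q.2 + 1)‖,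
      Finset.sum_congr rfl fun q hq => by rw [Finset.HasAntidiagonal.mem_antidiagonal.1 hq],
      Finset.sum_const, Finset.Nat.card_antidiagonal, nsmul_eq_mul]
  refine .of_norm (Finset.HasAntidiagonal.sigmaAntidiagonalEquivProd.summable_iff.1 ?_)
  refine (summable_sigma_of_nonneg fun _ => norm_nonneg _).2 ⟨fun t => .of_finite, ?_⟩
  exact ((summable_nat_add_iff 1).2 hf).congr fun t => (tsum_fibre t).symm

lemma summable_nat_mul_norm_transP {γ : ℝ} (hγ : 1 < γ) (c : ℝ) :
    Summable fun t : ℕ => (t : ℝ) * ‖transP c γ t‖ := by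
  have hsum : Summable fun t : ℕ => |c| * (t : ℝ) ^ (-γ) :=
    (Real.summable_nat_rpow.2 (by linarith)).mul_left _
  refine hsum.congr fun t => ?_
  rcases t.eq_zero_or_pos with rfl | ht
  · simp [transP, Real.zero_rpow (show -γ ≠ 0 by linarith)]
  · have ht' : (0 : ℝ) < t := by exact_mod_cast ht
    rw [transP, if_neg (by exact_mod_cast ht.ne'), Int.cast_natCast, abs_of_pos ht', norm_mul,
      Real.norm_eq_abs, Real.norm_of_nonneg (by positivity), Real.rpow_sub_one ht'.ne']
    field_simp

section Jumps

variable {ι E : Type*} [NormedAddCommGroup E] {S : Set ι} {G : ι → ℝ → E} {gm gp : ι → E}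

lemma tendsto_const_div_atTop_nhdsGE_zero {a : ℝ} (ha : 0 ≤ a) :
    Tendsto (fun n : ℕ => a / n) atTop (𝓝[≥] 0) :=
  tendsto_nhdsWithin_iff.2 ⟨tendsto_const_div_atTop_nhds_zero_nat a,
    .of_forall fun n => div_nonneg ha n.cast_nonneg⟩

lemma tendsto_const_div_atTop_nhdsLT_zero {a : ℝ} (ha : a < 0) :
    Tendsto (fun n : ℕ => a / n) atTop (𝓝[<] 0) :=
  tendsto_nhdsWithin_iff.2 ⟨tendsto_const_div_atTop_nhds_zero_nat a,
    (eventually_gt_atTop 0).mono fun _ hn => div_neg_of_neg_of_pos ha (Nat.cast_pos.2 hn)⟩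

lemma tendstoUniformlyOn_sub_sub_jump
    (hgm : TendstoUniformlyOn (fun u s => G s u) gm (𝓝[<] 0) S)
    (hgp : TendstoUniformlyOn (fun u s => G s u) gp (𝓝[≥] 0) S)
    {a b : ℝ} (ha : 0 ≤ a) (hb : b < 0) :
    TendstoUniformlyOn (fun (n : ℕ) s => (G s (a / n) - G s (b / n)) - (gp s - gm s)) 0
      atTop S := by
  have hright : TendstoUniformlyOn (fun (n : ℕ) s => G s (a / n)) gp atTop S := fun V hV =>
    (tendsto_const_div_atTop_nhdsGE_zero ha).eventually (hgp V hV)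
  have hleft : TendstoUniformlyOn (fun (n : ℕ) s => G s (b / n)) gm atTop S := fun V hV =>
    (tendsto_const_div_atTop_nhdsLT_zero hb).eventually (hgm V hV)
  have hjump := hright.sub hleft
  rw [Metric.tendstoUniformlyOn_iff] at hjump
  refine SeminormedAddGroup.tendstoUniformlyOn_zero.2 fun ε hε => ?_
  simpa only [dist_eq_norm', Pi.sub_apply] using hjump ε hε

lemma norm_sub_sub_jump_le {C : ℝ} (hC : ∀ s ∈ S, ∀ u, ‖G s u‖ ≤ C)
    (hgm : TendstoUniformlyOn (fun u s => G s u) gm (𝓝[<] 0) S)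
    (hgp : TendstoUniformlyOn (fun u s => G s u) gp (𝓝[≥] 0) S)
    {s : ι} (hs : s ∈ S) (u v : ℝ) : ‖(G s u - G s v) - (gp s - gm s)‖ ≤ 4 * C := by
  have hgmC : ‖gm s‖ ≤ C := le_of_tendsto (hgm.tendsto_at hs).norm (.of_forall (hC s hs))
  have hgpC : ‖gp s‖ ≤ C := le_of_tendsto (hgp.tendsto_at hs).norm (.of_forall (hC s hs))
  calc ‖(G s u - G s v) - (gp s - gm s)‖
      ≤ (‖G s u‖ + ‖G s v‖) + (‖gp s‖ + ‖gm s‖) :=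
        norm_sub_le_of_le (norm_sub_le _ _) (norm_sub_le _ _)
    _ ≤ 4 * C := by linarith [hC s hs u, hC s hs v]

lemma tendstoUniformlyOn_tsum_smul_jump [NormedSpace ℝ E] [CompleteSpace E] {κ : Type*}
    {w a b : κ → ℝ} {C : ℝ} (hw : Summable w) (ha : ∀ k, 0 ≤ a k) (hb : ∀ k, b k < 0)
    (hC : ∀ s ∈ S, ∀ u, ‖G s u‖ ≤ C)
    (hgm : TendstoUniformlyOn (fun u s => G s u) gm (𝓝[<] 0) S)
    (hgp : TendstoUniformlyOn (fun u s => G s u) gp (𝓝[≥] 0) S) :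
    TendstoUniformlyOn
      (fun (n : ℕ) s => ∑' k, w k • ((G s (a k / n) - G s (b k / n)) - (gp s - gm s)))
      0 atTop S := by
  have hlim (k : κ) : TendstoUniformlyOn
      (fun (n : ℕ) s => w k • ((G s (a k / n) - G s (b k / n)) - (gp s - gm s)))
      (fun _ => 0) atTop S := by
    simpa only [Function.comp_def, Pi.zero_apply, smul_zero] using
      (uniformContinuous_const_smul (w k)).comp_tendstoUniformlyOn
        (tendstoUniformlyOn_sub_sub_jump hgm hgp (ha k) (hb k))
  have hle (n : ℕ) (s : ι) (hs : s ∈ S) (k : κ) :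
      ‖w k • ((G s (a k / n) - G s (b k / n)) - (gp s - gm s))‖ ≤ ‖w k‖ * (4 * C) := by
    rw [norm_smul]
    gcongr
    exact norm_sub_sub_jump_le hC hgm hgp hs _ _
  have htsum := tendstoUniformlyOn_tsum_of_dominated (hw.norm.mul_right (4 * C)) hlim
    (.of_forall hle)
  rwa [tsum_zero] at htsum

end Jumps

section TestFunctions

variable {G Gm Gp : ℝ → ℝ → ℝ} {K : Set ℝ}

lemma SDifMem.continuous (hG : SDifMem G) : Continuous fun q : ℝ × ℝ => G q.1 q.2 := by
  obtain ⟨k, a, ha, hGa⟩ := hG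
  have hcont (j : ℕ) : Continuous (a j) := (ha j).1.continuous
  simp only [hGa]
  fun_prop

lemma SDifMem.exists_norm_le (hG : SDifMem G) (hK : IsCompact K) :
    ∃ C, ∀ s ∈ K, ∀ u, ‖G s u‖ ≤ C := by
  obtain ⟨k, a, ha, hGa⟩ := hG
  choose A hA using fun j => (ha j).2.exists_bound_of_continuous (ha j).1.continuous
  obtain ⟨R, hR⟩ := hK.isBounded.exists_norm_le
  refine ⟨∑ j ∈ Finset.range (k + 1), A j * R ^ j, fun s hs u => ?_⟩
  rw [hGa]
  refine norm_sum_le_of_le _ fun j _ => ?_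
  rw [norm_mul, norm_pow]
  exact mul_le_mul (hA j u) (pow_le_pow_left₀ (norm_nonneg s) (hR s hs) j) (by positivity)
    ((norm_nonneg _).trans (hA j u))

lemma SDifMem.tendstoUniformlyOn (hG : SDifMem G) (hK : IsCompact K) (u₀ : ℝ) :
    TendstoUniformlyOn (fun u s => G s u) (fun s => G s u₀) (𝓝 u₀) K := by
  have hcont : Continuous (Function.uncurry fun u s => G s u) := hG.continuous.comp continuous_swap
  intro V hV
  obtain ⟨U, hU, hUV⟩ := hK.mem_uniformity_of_prod (s := univ) hcont.continuousOn (mem_univ u₀)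
    (symm_le_uniformity hV)
  rw [nhdsWithin_univ] at hU
  filter_upwards [hU] with u hu s hs using hUV u hu s hs

namespace SRobDecomposition

lemma exists_norm_le (hG : SRobDecomposition G Gm Gp) (hK : IsCompact K) :
    ∃ C, ∀ s ∈ K, ∀ u, ‖G s u‖ ≤ C := by
  obtain ⟨Cm, hCm⟩ := hG.left.exists_norm_le hK
  obtain ⟨Cp, hCp⟩ := hG.right.exists_norm_le hK
  refine ⟨max Cm Cp, fun s hs u => ?_⟩
  rw [hG.eq_ite]
  split_ifs
  · exact (hCm s hs u).trans (le_max_left _ _)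
  · exact (hCp s hs u).trans (le_max_right _ _)

lemma tendstoUniformlyOn_left (hG : SRobDecomposition G Gm Gp) (hK : IsCompact K) :
    TendstoUniformlyOn (fun u s => G s u) (fun s => Gm s 0) (𝓝[<] 0) K := by
  intro V hV
  filter_upwards [nhdsWithin_le_nhds (hG.left.tendstoUniformlyOn hK 0 V hV),
    self_mem_nhdsWithin] with u hu hu0 s hs
  rw [hG.eq_ite, if_pos (mem_Iio.1 hu0)]
  exact hu s hs

lemma tendstoUniformlyOn_right (hG : SRobDecomposition G Gm Gp) (hK : IsCompact K) :
    TendstoUniformlyOn (fun u s => G s u) (fun s => Gp s 0) (𝓝[≥] 0) K := by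
  intro V hV
  filter_upwards [nhdsWithin_le_nhds (hG.right.tendstoUniformlyOn hK 0 V hV),
    self_mem_nhdsWithin] with u hu hu0 s hs
  rw [hG.eq_ite, if_neg (not_lt.2 (mem_Ici.1 hu0))]
  exact hu s hs

end SRobDecomposition

end TestFunctions

theorem stmt17_general {ι : Type*} {S : Set ι} {p : ℤ → ℝ} {G : ι → ℝ → ℝ} {gm gp : ι → ℝ}
    (hp : Summable fun t : ℕ => (t : ℝ) * ‖p t‖) (hG : ∃ C, ∀ s ∈ S, ∀ u, ‖G s u‖ ≤ C)
    (hgm : TendstoUniformlyOn (fun u s => G s u) gm (𝓝[<] 0) S)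
    (hgp : TendstoUniformlyOn (fun u s => G s u) gp (𝓝[≥] 0) S) :
    Tendsto (fun n : ℕ =>
        ⨆ s ∈ S,
          |∑' q : ℕ × ℕ, p ((q.1 : ℤ) - (-(q.2 : ℤ) - 1)) *
            ((G s ((q.1 : ℝ) / n) - G s ((-(q.2 : ℝ) - 1) / n)) - (gp s - gm s))|)
      atTop (𝓝 0) := by
  obtain ⟨C, hC⟩ := hG
  have hweight : Summable fun q : ℕ × ℕ => p ((q.1 : ℤ) - (-(q.2 : ℤ) - 1)) :=
    (summable_prod_add_add_one hp).congr fun q => by congr 1; push_cast; ring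
  have hseries := tendstoUniformlyOn_tsum_smul_jump
    (a := fun q : ℕ × ℕ => q.1) (b := fun q => -(q.2 : ℝ) - 1) hweight
    (fun q => q.1.cast_nonneg) (fun q => by linarith [q.2.cast_nonneg (α := ℝ)]) hC hgm hgp
  simpa only [smul_eq_mul, Real.norm_eq_abs] using
    tendsto_biSup_norm_of_tendstoUniformlyOn hseries

theorem stmt17 (γ c T : ℝ) (hγ : γ ∈ Set.Ioo (1 : ℝ) 2) (hc : 0 < c)
    (hprob : HasSum (transP c γ) 1) (hT : 0 < T)
    -- G ∈ S_Rob with decomposition G = G₋ 1_{u<0} + G₊ 1_{u≥0};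
    -- G(s,0⁻) = G₋(s,0) and G(s,0⁺) = G₊(s,0)
    (G Gm Gp : ℝ → ℝ → ℝ) (hGm : SDifMem Gm) (hGp : SDifMem Gp)
    (hG : ∀ t u : ℝ, G t u = if u < 0 then Gm t u else Gp t u) :
    Tendsto (fun n : ℕ =>
        ⨆ s ∈ Set.Icc (0 : ℝ) T,
          |∑' q : ℕ × ℕ,  -- z = q.1 ≥ 0, x = −q.2 − 1 ≤ −1
            transP c γ ((q.1 : ℤ) - (-(q.2 : ℤ) - 1)) *
              ((G s ((q.1 : ℝ) / n) - G s ((-(q.2 : ℝ) - 1) / n)) - (Gp s 0 - Gm s 0))|)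
      atTop (𝓝 0) := by
  have hRob : SRobDecomposition G Gm Gp := ⟨hGm, hGp, hG⟩
  exact stmt17_general (summable_nat_mul_norm_transP hγ.1 c) (hRob.exists_norm_le isCompact_Icc)
    (hRob.tendstoUniformlyOn_left isCompact_Icc) (hRob.tendstoUniformlyOn_right isCompact_Icc)
end

section
/- Let ℓ₀ be a positive even integer, M ≥ 1 an integer, and set ℓ_i := 2^i ℓ₀ for i ≥ 0. For i ∈ {1,…,M}, y ∈ {1,…,ℓ_{i−1}}, j ∈ {1,…,ℓ_{i−1}/2}, define z^i_{0,j}(y) := y, z^i_{1,j}(y) := y + ℓ_{i−1}/2 + j, z^i_{2,j}(y) := y + ℓ_{i−1}. Then the map Φ sending (i, y, j, k), with i ∈ {1,…,M}, y ∈ {1,…,ℓ_{i−1}}, j ∈ {1,…,ℓ_{i−1}/2} and k ∈ {1,2}, to the pair (z^i_{k−1,j}(y), z^i_{k,j}(y)) ∈ ℤ×ℤ is injective. -/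
/-- The intermediate sites used in the moving particle lemma:
`z^i_{0,j}(y) = y`, `z^i_{1,j}(y) = y + ℓ_{i−1}/2 + j`, `z^i_{2,j}(y) = y + ℓ_{i−1}`,
where `ℓ_{i−1} = 2^{i−1} ℓ₀`. -/
def zSite (ℓ₀ i y j : ℕ) : ℕ → ℤ := fun m =>
  if m = 0 then (y : ℤ)
  else if m = 1 then (y : ℤ) + ((2 ^ (i - 1) * ℓ₀) / 2 : ℕ) + (j : ℤ)
  else (y : ℤ) + (2 ^ (i - 1) * ℓ₀ : ℕ)

/-- The map `Φ : (i, y, j, k) ↦ (z^i_{k−1,j}(y), z^i_{k,j}(y))`. -/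
def PhiMap (ℓ₀ : ℕ) (q : ℕ × ℕ × ℕ × ℕ) : ℤ × ℤ :=
  (zSite ℓ₀ q.1 q.2.1 q.2.2.1 (q.2.2.2 - 1), zSite ℓ₀ q.1 q.2.1 q.2.2.1 q.2.2.2)

/-!
Put `L = ℓ_{i-1}`. A step with `k = 1` has length `L / 2 + j`, whose double lies in `(L, 2 L]`, and
a step with `k = 2` ends at `y + L`, again a point of `(L, 2 L]`. These intervals are disjoint for
distinct dyadic scales, so the scale of a step can be read off once `k` is known, and then so can
`y` and `j`. Finally `k` itself is determined: if a `k = 1` step of scale `L` were also a `k = 2`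
step of scale `K`, its length would exceed `L / 2` and be at most `K / 2`, so `L < K` and hence
`2 L ≤ K`; but then the first description puts its start at most at `L ≤ K / 2`, the second
beyond `K / 2`.
-/

/-- The scale `ℓ_{i-1} = 2^(i-1) ℓ₀`, with the paper's index shift; the truncated subtraction makes
the indices `0` and `1` give the same scale. -/
def dyadicScale (ℓ₀ i : ℕ) : ℕ :=
  2 ^ (i - 1) * ℓ₀

section DyadicScale

variable {ℓ₀ i i' : ℕ}

theorem dyadicScale_monotone (ℓ₀ : ℕ) : Monotone (dyadicScale ℓ₀) := fun _ _ h =>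
  Nat.mul_le_mul_right ℓ₀ (Nat.pow_le_pow_right two_pos (Nat.sub_le_sub_right h 1))

theorem dyadicScale_add_one (hi : 1 ≤ i) : dyadicScale ℓ₀ (i + 1) = 2 * dyadicScale ℓ₀ i := by
  obtain ⟨n, rfl⟩ := Nat.exists_eq_add_of_le' hi
  simp only [dyadicScale, Nat.add_sub_cancel]
  ring

theorem two_mul_dyadicScale_le_of_lt (hi : 1 ≤ i) (h : i < i') :
    2 * dyadicScale ℓ₀ i ≤ dyadicScale ℓ₀ i' :=
  dyadicScale_add_one hi ▸ dyadicScale_monotone ℓ₀ h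

theorem eq_of_mem_Ioc_dyadicScale {x : ℕ} (hi : 1 ≤ i) (hi' : 1 ≤ i')
    (hx : x ∈ Set.Ioc (dyadicScale ℓ₀ i) (2 * dyadicScale ℓ₀ i))
    (hx' : x ∈ Set.Ioc (dyadicScale ℓ₀ i') (2 * dyadicScale ℓ₀ i')) : i = i' := by
  rw [← dyadicScale_add_one hi] at hx
  rw [← dyadicScale_add_one hi'] at hx'
  exact (dyadicScale_monotone ℓ₀).pairwise_disjoint_on_Ioc_succ.eq
    (Set.not_disjoint_iff.mpr ⟨x, hx, hx'⟩)

end DyadicScale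

theorem two_mul_half_add_mem_Ioc {L j : ℕ} (hj : j ∈ Set.Icc 1 (L / 2)) :
    2 * (L / 2 + j) ∈ Set.Ioc L (2 * L) := by
  rw [Set.mem_Icc] at hj
  constructor <;> omega

theorem add_self_mem_Ioc {L y : ℕ} (hy : y ∈ Set.Icc 1 L) : y + L ∈ Set.Ioc L (2 * L) := by
  rw [Set.mem_Icc] at hy
  constructor <;> omega

section PhiMap

variable {ℓ₀ i i' y y' j j' : ℕ}

theorem phiMap_one_eq_iff :
    PhiMap ℓ₀ (i, y, j, 1) = PhiMap ℓ₀ (i', y', j', 1) ↔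
      y = y' ∧ y + dyadicScale ℓ₀ i / 2 + j = y' + dyadicScale ℓ₀ i' / 2 + j' := by
  simp only [PhiMap, zSite, dyadicScale, Prod.mk.injEq]
  norm_cast

theorem phiMap_two_eq_iff :
    PhiMap ℓ₀ (i, y, j, 2) = PhiMap ℓ₀ (i', y', j', 2) ↔
      y + dyadicScale ℓ₀ i / 2 + j = y' + dyadicScale ℓ₀ i' / 2 + j' ∧
        y + dyadicScale ℓ₀ i = y' + dyadicScale ℓ₀ i' := by
  simp only [PhiMap, zSite, dyadicScale, Prod.mk.injEq]
  norm_cast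

theorem phiMap_one_eq_phiMap_two_iff :
    PhiMap ℓ₀ (i, y, j, 1) = PhiMap ℓ₀ (i', y', j', 2) ↔
      y = y' + dyadicScale ℓ₀ i' / 2 + j' ∧
        y + dyadicScale ℓ₀ i / 2 + j = y' + dyadicScale ℓ₀ i' := by
  simp only [PhiMap, zSite, dyadicScale, Prod.mk.injEq]
  norm_cast

theorem eq_of_phiMap_one_eq (hi : 1 ≤ i) (hi' : 1 ≤ i')
    (hj : j ∈ Set.Icc 1 (dyadicScale ℓ₀ i / 2)) (hj' : j' ∈ Set.Icc 1 (dyadicScale ℓ₀ i' / 2))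
    (h : PhiMap ℓ₀ (i, y, j, 1) = PhiMap ℓ₀ (i', y', j', 1)) : i = i' ∧ y = y' ∧ j = j' := by
  obtain ⟨rfl, hend⟩ := phiMap_one_eq_iff.mp h
  have hlength : dyadicScale ℓ₀ i / 2 + j = dyadicScale ℓ₀ i' / 2 + j' := by omega
  obtain rfl : i = i' := eq_of_mem_Ioc_dyadicScale hi hi' (two_mul_half_add_mem_Ioc hj)
    (hlength ▸ two_mul_half_add_mem_Ioc hj')
  exact ⟨rfl, rfl, Nat.add_left_cancel hlength⟩

theorem eq_of_phiMap_two_eq (hi : 1 ≤ i) (hi' : 1 ≤ i')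
    (hy : y ∈ Set.Icc 1 (dyadicScale ℓ₀ i)) (hy' : y' ∈ Set.Icc 1 (dyadicScale ℓ₀ i'))
    (h : PhiMap ℓ₀ (i, y, j, 2) = PhiMap ℓ₀ (i', y', j', 2)) : i = i' ∧ y = y' ∧ j = j' := by
  obtain ⟨hstart, hend⟩ := phiMap_two_eq_iff.mp h
  obtain rfl : i = i' := eq_of_mem_Ioc_dyadicScale hi hi' (add_self_mem_Ioc hy)
    (hend ▸ add_self_mem_Ioc hy')
  obtain rfl : y = y' := Nat.add_right_cancel hend
  exact ⟨rfl, rfl, Nat.add_left_cancel hstart⟩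

theorem phiMap_one_ne_phiMap_two (hi : 1 ≤ i) (hy : y ≤ dyadicScale ℓ₀ i)
    (hj : j ∈ Set.Icc 1 (dyadicScale ℓ₀ i / 2)) (hj' : 1 ≤ j') :
    PhiMap ℓ₀ (i, y, j, 1) ≠ PhiMap ℓ₀ (i', y', j', 2) := by
  intro h
  obtain ⟨hstart, hend⟩ := phiMap_one_eq_phiMap_two_iff.mp h
  have hlength : 2 * (dyadicScale ℓ₀ i / 2 + j) ≤ dyadicScale ℓ₀ i' := by omega
  have hscale : dyadicScale ℓ₀ i < dyadicScale ℓ₀ i' :=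
    (two_mul_half_add_mem_Ioc hj).1.trans_le hlength
  have hdouble : 2 * dyadicScale ℓ₀ i ≤ dyadicScale ℓ₀ i' :=
    two_mul_dyadicScale_le_of_lt hi ((dyadicScale_monotone ℓ₀).reflect_lt hscale)
  omega

end PhiMap

theorem stmt19_general (ℓ₀ : ℕ) :
    Set.InjOn (PhiMap ℓ₀)
      {q : ℕ × ℕ × ℕ × ℕ |
        1 ≤ q.1 ∧ q.2.1 ∈ Set.Icc 1 (dyadicScale ℓ₀ q.1) ∧
        q.2.2.1 ∈ Set.Icc 1 (dyadicScale ℓ₀ q.1 / 2) ∧ (q.2.2.2 = 1 ∨ q.2.2.2 = 2)} := by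
  rintro ⟨i, y, j, k⟩ ⟨hi, hy, hj, rfl | rfl⟩ ⟨i', y', j', k'⟩ ⟨hi', hy', hj', rfl | rfl⟩ h
  · obtain ⟨rfl, rfl, rfl⟩ := eq_of_phiMap_one_eq hi hi' hj hj' h
    rfl
  · exact absurd h (phiMap_one_ne_phiMap_two hi hy.2 hj hj'.1)
  · exact absurd h.symm (phiMap_one_ne_phiMap_two hi' hy'.2 hj' hj.1)
  · obtain ⟨rfl, rfl, rfl⟩ := eq_of_phiMap_two_eq hi hi' hy hy' h
    rfl

theorem stmt19 (ℓ₀ M : ℕ) (hℓ₀ : 0 < ℓ₀) (heven : Even ℓ₀) (hM : 1 ≤ M) :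
    Set.InjOn (PhiMap ℓ₀)
      {q : ℕ × ℕ × ℕ × ℕ |
        1 ≤ q.1 ∧ q.1 ≤ M ∧
        1 ≤ q.2.1 ∧ q.2.1 ≤ 2 ^ (q.1 - 1) * ℓ₀ ∧
        1 ≤ q.2.2.1 ∧ q.2.2.1 ≤ (2 ^ (q.1 - 1) * ℓ₀) / 2 ∧
        (q.2.2.2 = 1 ∨ q.2.2.2 = 2)} := by
  refine (stmt19_general ℓ₀).mono ?_
  exact fun _ ⟨hi, _, hy, hyL, hj, hjL, hk⟩ => ⟨hi, ⟨hy, hyL⟩, ⟨hj, hjL⟩, hk⟩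
end
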